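/- arXiv:2210.07550 — 14 statements merged into one kernel-verified Lean document; each statement's English description precedes it below -/
import Mathlib

section
/- Let q be a prime power and let w_0, w_1, …, w_n be positive integers with w_0 dividing q−1. For 0 ≤ i ≤ n set d_i = (q−1)/gcd(q−1, w_i) and w̃_i = w_i/gcd(q−1, w_i), and for 1 ≤ i ≤ n set F_i = x_i^{d_i} − x_0^{d_0·w̃_i} in 𝔽_q[x_0,…,x_n]. Then a polynomial F ∈ 𝔽_q[x_0,…,x_n] that is weighted homogeneous (with respect to the weights w_0,…,w_n) vanishes at every point (t_0^{w_0}, t_1^{w_1}, …, t_n^{w_n}) with t_0,…,t_n ∈ 𝔽_q^× if and only if F lies in the ideal of 𝔽_q[x_0,…,x_n] generated by F_1, …, F_n. -/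
open MvPolynomial

lemma aux_card (F : Type) [Field F] [Fintype F] [DecidableEq F] (k : ℕ) :
    (Finset.univ.image (fun u : Fˣ => (u : F) ^ k)).card =
      (Fintype.card F - 1) / Nat.gcd (Fintype.card F - 1) k := by
  classical
  have h1 : Nat.card (powMonoidHom k : Fˣ →* Fˣ).range =
      (Finset.univ.image (fun u : Fˣ => (u : F) ^ k)).card := by
    have : (Finset.univ.image (fun u : Fˣ => (u : F) ^ k)) =
        (Finset.univ.image (fun u : Fˣ => u ^ k)).image (fun u : Fˣ => (u : F)) := by
      rw [Finset.image_image]; congr 1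
    rw [this, Finset.card_image_of_injective _ Units.val_injective]
    rw [← Set.ncard_coe_finset]
    rw [← Nat.card_coe_set_eq]
    refine Nat.card_congr (Equiv.setCongr ?_)
    ext x; simp
  rw [← h1, IsCyclic.card_powMonoidHom_range, Nat.card_eq_fintype_card, Fintype.card_units]

lemma aux_mono (n : ℕ) (F : Type) [Field F] (d e : Fin n → ℕ)
    (m : Fin (n + 1) →₀ ℕ) (m' : Fin (n + 1) →₀ ℕ)
    (hs : ∀ i : Fin n, m' i.succ = m i.succ % d i)
    (h0 : m' 0 = m 0 + ∑ i : Fin n, e i * (m i.succ / d i)) :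
    (monomial m (1 : F) - monomial m' 1) ∈ Ideal.span (Set.range fun i : Fin n =>
        (X i.succ ^ d i - X 0 ^ e i : MvPolynomial (Fin (n + 1)) F)) := by
  set I := Ideal.span (Set.range fun i : Fin n =>
        (X i.succ ^ d i - X 0 ^ e i : MvPolynomial (Fin (n + 1)) F)) with hI
  have key : ∀ i : Fin n, (Ideal.Quotient.mk I (X i.succ)) ^ d i =
      (Ideal.Quotient.mk I (X 0)) ^ e i := by
    intro i
    rw [← map_pow, ← map_pow, Ideal.Quotient.eq]
    exact Ideal.subset_span ⟨i, rfl⟩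
  rw [← Ideal.Quotient.eq, monomial_eq, monomial_eq, Finsupp.prod_fintype _ _ (by simp),
    Finsupp.prod_fintype _ _ (by simp), Fin.prod_univ_succ, Fin.prod_univ_succ, h0]
  simp only [map_mul, map_pow, map_prod, map_one, one_mul, hs]
  rw [pow_add, mul_assoc, ← Finset.prod_pow_eq_pow_sum, ← Finset.prod_mul_distrib]
  congr 1
  refine Finset.prod_congr rfl fun i _ => ?_
  rw [pow_mul, ← key i, ← pow_mul, ← pow_add, Nat.div_add_mod]

/-- Let `q` be a prime power (realized as the cardinality of a finite
field `𝔽`) and `w 0, …, w n` positive integers with `w 0 ∣ q - 1`.  With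
`d i = (q-1)/gcd(q-1, w i)`, `w̃ i = w i / gcd(q-1, w i)` and
`Fᵢ = xᵢ^{dᵢ} - x₀^{d₀·w̃ᵢ}` for `1 ≤ i ≤ n`, a weighted homogeneous polynomial
vanishes at every point `(t₀^{w₀}, …, tₙ^{wₙ})` with `tᵢ ∈ 𝔽ˣ` iff it lies in the
ideal generated by `F₁, …, Fₙ`. -/
theorem stmt0 (n : ℕ) (F : Type) [Field F] [Fintype F] (q : ℕ) (hq : Fintype.card F = q)
    (w : Fin (n + 1) → ℕ) (hw : ∀ i, 0 < w i) (hw0 : w 0 ∣ q - 1)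
    (d wt : Fin (n + 1) → ℕ)
    (hd : ∀ i, d i = (q - 1) / Nat.gcd (q - 1) (w i))
    (hwt : ∀ i, wt i = w i / Nat.gcd (q - 1) (w i))
    (P : MvPolynomial (Fin (n + 1)) F) (α : ℕ)
    (hP : IsWeightedHomogeneous w P α) :
    (∀ t : Fin (n + 1) → Fˣ, eval (fun i => (t i : F) ^ w i) P = 0) ↔
      P ∈ Ideal.span (Set.range fun i : Fin n =>
        (X i.succ ^ d i.succ - X 0 ^ (d 0 * wt i.succ) : MvPolynomial (Fin (n + 1)) F)) := by
  classical
  subst hq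
  set N := Fintype.card F - 1 with hN
  have hNpos : 0 < N := by have := Fintype.one_lt_card (α := F); omega
  have hg : ∀ i, 0 < Nat.gcd N (w i) := fun i => Nat.gcd_pos_of_pos_left _ hNpos
  have hdpos : ∀ i, 0 < d i := fun i => by
    rw [hd]; exact Nat.div_pos (Nat.gcd_le_left _ hNpos) (hg i)
  have hdw : ∀ i, d i * w i = N * wt i := fun i => by
    rw [hd, hwt]
    obtain ⟨a, ha⟩ := Nat.gcd_dvd_left N (w i)
    obtain ⟨b, hb⟩ := Nat.gcd_dvd_right N (w i)
    have e1 : N / Nat.gcd N (w i) = a := Nat.div_eq_of_eq_mul_right (hg i) ha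
    have e2 : w i / Nat.gcd N (w i) = b := Nat.div_eq_of_eq_mul_right (hg i) hb
    rw [e1, e2]
    calc a * w i = a * (Nat.gcd N (w i) * b) := by rw [← hb]
      _ = (Nat.gcd N (w i) * a) * b := by ring
      _ = N * b := by rw [← ha]
  have hd0 : d 0 * w 0 = N := by
    rw [hd, Nat.gcd_eq_right hw0, Nat.div_mul_cancel hw0]
  have hone : ∀ u : Fˣ, (u : F) ^ N = 1 := fun u =>
    FiniteField.pow_card_sub_one_eq_one _ u.ne_zero
  have hone' : ∀ (u : Fˣ) i, ((u : F) ^ w i) ^ d i = 1 := fun u i => by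
    rw [← pow_mul, mul_comm, hdw, pow_mul, hone, one_pow]
  constructor
  · intro hv
    let ρ : (Fin (n + 1) →₀ ℕ) → (Fin n →₀ ℕ) := fun m =>
      Finsupp.equivFunOnFinite.symm fun i => m i.succ % d i.succ
    let ex : (Fin n →₀ ℕ) → ℕ := fun r => (α - ∑ i : Fin n, r i * w i.succ) / w 0
    let Q : MvPolynomial (Fin n) F := ∑ m ∈ P.support, monomial (ρ m) (coeff m P)
    have hQ : Q = 0 := by
      refine eq_zero_of_eval_zero_at_prod_finset Q
        (fun i => Finset.univ.image (fun u : Fˣ => (u : F) ^ w i.succ)) ?_ ?_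
      · intro i
        rw [aux_card, ← hN, ← hd]
        refine lt_of_le_of_lt (degreeOf_sum_le _ _ _) ?_
        rw [Finset.sup_lt_iff (by simpa using hdpos i.succ)]
        intro m hm
        rw [degreeOf_monomial_eq _ _ (mem_support_iff.mp hm)]
        exact Nat.mod_lt _ (hdpos _)
      · intro x hx
        have hx' : ∀ i, ∃ u : Fˣ, (u : F) ^ w i.succ = x i := fun i => by
          simpa using hx i
        choose u hu using hx'
        rw [← hv (Fin.cons 1 u), eval_eq' _ P]
        simp only [Q, map_sum, eval_monomial]
        refine Finset.sum_congr rfl fun m _ => ?_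
        rw [Finsupp.prod_fintype _ _ (by simp), Fin.prod_univ_succ]
        simp only [Fin.cons_zero, Fin.cons_succ, Units.val_one, one_pow, one_mul]
        congr 1
        refine Finset.prod_congr rfl fun i _ => ?_
        rw [← hu i]
        change _ ^ (m i.succ % d i.succ) = _
        conv_rhs => rw [← Nat.div_add_mod (m i.succ) (d i.succ), pow_add, pow_mul, hone',
          one_pow, one_mul]
    let L : MvPolynomial (Fin n) F →ₗ[F] MvPolynomial (Fin (n + 1)) F :=
      (basisMonomials (Fin n) F).constr F fun r => monomial (Finsupp.cons (ex r) r) 1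
    have hL : ∀ r c, L (monomial r c) = c • monomial (Finsupp.cons (ex r) r) 1 := by
      intro r c
      have : (monomial r c : MvPolynomial (Fin n) F) = c • basisMonomials (Fin n) F r := by
        simp [smul_monomial]
      rw [this, map_smul, Module.Basis.constr_basis]
    have hLQ : L Q = 0 := by rw [hQ, map_zero]
    have hPQ : P = ∑ m ∈ P.support,
        coeff m P • (monomial m 1 - monomial (Finsupp.cons (ex (ρ m)) (ρ m)) 1) := by
      simp only [smul_sub, Finset.sum_sub_distrib]
      simp only [Q, map_sum, hL] at hLQ
      rw [hLQ, sub_zero]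
      conv_lhs => rw [P.as_sum]
      simp [smul_monomial]
    rw [hPQ]
    refine Ideal.sum_mem _ fun m hm => ?_
    rw [smul_eq_C_mul]
    refine Ideal.mul_mem_left _ _ ?_
    refine aux_mono n F (fun i => d i.succ) (fun i => d 0 * wt i.succ) m _ ?_ ?_
    · intro i; simp [ρ]
    · rw [Finsupp.cons_zero]
      have hα := hP (mem_support_iff.mp hm)
      rw [Finsupp.weight_apply, Finsupp.sum_fintype _ _ (by simp), Fin.sum_univ_succ] at hα
      simp only [smul_eq_mul] at hα
      apply Nat.div_eq_of_eq_mul_left (hw 0)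
      apply Nat.sub_eq_of_eq_add
      rw [← hα, add_mul, add_assoc, Finset.sum_mul, ← Finset.sum_add_distrib]
      congr 1
      refine Finset.sum_congr rfl fun i _ => ?_
      change _ = _ + (m i.succ % d i.succ) * w i.succ
      have h1 : d 0 * wt i.succ * (m i.succ / d i.succ) * w 0 =
          d i.succ * (m i.succ / d i.succ) * w i.succ := by
        calc _ = (d 0 * w 0) * wt i.succ * (m i.succ / d i.succ) := by ring
          _ = (d i.succ * w i.succ) * (m i.succ / d i.succ) := by rw [hd0, hdw]
          _ = _ := by ring
      rw [h1, ← add_mul, Nat.div_add_mod]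
  · intro hmem t
    rw [← RingHom.mem_ker]
    refine (Ideal.span_le.mpr ?_) hmem
    rintro _ ⟨i, rfl⟩
    simp only [SetLike.mem_coe, RingHom.mem_ker, map_sub, map_pow, eval_X]
    rw [hone', pow_mul, hone', one_pow, sub_self]
end

section
/- Let q be a prime power and let w_0, w_1, …, w_n be positive integers with w_0 dividing q−1. For 0 ≤ i ≤ n set d_i = (q−1)/gcd(q−1, w_i), and let A = {(t_0^{w_0}, t_1^{w_1}, …, t_n^{w_n}) : t_0,…,t_n ∈ 𝔽_q^×} ⊆ 𝔽_q^{n+1}. For γ ∈ ℤ let D(γ) = #{(m_0,…,m_n) ∈ ℕ^{n+1} : m_0 w_0 + ⋯ + m_n w_n = γ} (so D(γ) = 0 for γ < 0). Then for every α ∈ ℕ, the rank over 𝔽_q of the evaluation map ev_A : S_α → (A → 𝔽_q) equals Σ_{s=0}^{n} (−1)^s Σ_{I ⊆ {1,…,n}, |I| = s} D(α − Σ_{i∈I} d_i w_i). -/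
open MvPolynomial

/-- Evaluation of multivariate polynomials at the points of a set `Y`, as a linear map. -/
noncomputable def evalOn {n : ℕ} (F : Type) [CommSemiring F] (Y : Set (Fin n → F)) :
    MvPolynomial (Fin n) F →ₗ[F] (Y → F) where
  toFun P := fun y => eval y.val P
  map_add' := by intro P Q; funext y; simp
  map_smul' := by intro c P; funext y; simp [MvPolynomial.smul_eval]

/-- The evaluation code: image of the space of weighted homogeneous polynomials of
degree `α` under evaluation at the points of `Y`. -/
noncomputable def code {n : ℕ} (F : Type) [Field F] (w : Fin n → ℕ) (α : ℕ)
    (Y : Set (Fin n → F)) : Submodule F (Y → F) :=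
  Submodule.map (evalOn F Y) (weightedHomogeneousSubmodule F w α)

/-- `D w γ` is the number of monomial exponent vectors of weighted degree `γ ∈ ℤ`
(it is `0` for `γ < 0`). -/
noncomputable def numMonomials {m : ℕ} (w : Fin m → ℕ) (γ : ℤ) : ℕ :=
  Nat.card {v : Fin m → ℕ // (∑ i, (v i : ℤ) * (w i : ℤ)) = γ}

/-- Exponent vectors of weighted degree `α`. -/
def expSet {n : ℕ} (w : Fin (n + 1) → ℕ) (α : ℕ) : Finset (Fin (n + 1) → ℕ) :=
  (Fintype.piFinset (fun _ => Finset.range (α + 1))).filter (fun v => ∑ i, v i * w i = α)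

theorem mem_expSet {n : ℕ} (w : Fin (n + 1) → ℕ) (hw : ∀ i, 0 < w i) (α : ℕ)
    (v : Fin (n + 1) → ℕ) : v ∈ expSet w α ↔ ∑ i, v i * w i = α := by
  unfold expSet
  rw [Finset.mem_filter, Fintype.mem_piFinset]
  refine ⟨fun h => h.2, fun h => ⟨fun i => ?_, h⟩⟩
  rw [Finset.mem_range, Nat.lt_succ_iff]
  calc v i ≤ v i * w i := Nat.le_mul_of_pos_right _ (hw i)
    _ ≤ ∑ i, v i * w i :=
      Finset.single_le_sum (f := fun i => v i * w i) (fun _ _ => Nat.zero_le _)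
        (Finset.mem_univ i)
    _ = α := h

theorem numMonomials_eq {n : ℕ} (w : Fin (n + 1) → ℕ) (hw : ∀ i, 0 < w i) (α : ℕ)
    (d : Fin (n + 1) → ℕ) (I : Finset (Fin n)) :
    numMonomials w ((α : ℤ) - ∑ i ∈ I, (d i.succ : ℤ) * (w i.succ : ℤ)) =
      ((expSet w α).filter (fun v => ∀ i ∈ I, d i.succ ≤ v i.succ)).card := by
  classical
  set e : Fin (n + 1) → ℕ := Fin.cons 0 (fun i => if i ∈ I then d i.succ else 0) with he
  have hsum : ∑ i, (e i : ℤ) * (w i : ℤ) = ∑ i ∈ I, (d i.succ : ℤ) * (w i.succ : ℤ) := by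
    rw [Fin.sum_univ_succ]
    simp [he, Finset.sum_ite_mem]
  have hle : ∀ v : Fin (n + 1) → ℕ, (∀ i ∈ I, d i.succ ≤ v i.succ) ↔ ∀ i, e i ≤ v i := by
    intro v
    constructor
    · intro h i
      refine Fin.cases ?_ (fun j => ?_) i
      · simp [he]
      · simp only [he, Fin.cons_succ]
        split_ifs with hj
        · exact h j hj
        · exact Nat.zero_le _
    · intro h i hi
      have := h i.succ
      simpa [he, hi] using this
  unfold numMonomials
  rw [← Fintype.card_coe, ← Nat.card_eq_fintype_card]
  refine Nat.card_congr
    { toFun := fun v => ⟨fun i => v.1 i + e i, ?_⟩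
      invFun := fun v => ⟨fun i => v.1 i - e i, ?_⟩
      left_inv := ?_
      right_inv := ?_ }
  · rw [Finset.mem_filter, mem_expSet w hw]
    refine ⟨?_, (hle _).mpr fun i => Nat.le_add_left _ _⟩
    have h1 := v.2
    zify
    simp only [add_mul, Finset.sum_add_distrib]
    linarith
  · have h1 := v.2
    rw [Finset.mem_filter, mem_expSet w hw, hle] at h1
    obtain ⟨h1, h2⟩ := h1
    have h3 : (α : ℤ) = ∑ i, (v.1 i : ℤ) * (w i : ℤ) := by
      exact_mod_cast h1.symm
    rw [← hsum, h3, ← Finset.sum_sub_distrib]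
    refine Finset.sum_congr rfl fun i _ => ?_
    rw [Nat.cast_sub (h2 i)]
    ring
  · intro v
    apply Subtype.ext
    funext i
    simp
  · intro v
    have h1 := v.2
    rw [Finset.mem_filter, hle] at h1
    apply Subtype.ext
    funext i
    exact Nat.sub_add_cancel (h1.2 i)

theorem incl_excl {n : ℕ} (w : Fin (n + 1) → ℕ) (α : ℕ) (d : Fin (n + 1) → ℕ) :
    (((expSet w α).filter (fun v => ∀ i : Fin n, v i.succ < d i.succ)).card : ℤ) =
      ∑ I : Finset (Fin n), (-1 : ℤ) ^ I.card *
        (((expSet w α).filter (fun v => ∀ i ∈ I, d i.succ ≤ v i.succ)).card : ℤ) := by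
  classical
  simp only [Finset.card_filter, Nat.cast_sum, Finset.mul_sum]
  rw [Finset.sum_comm]
  refine Finset.sum_congr rfl fun v _ => ?_
  have h := Finset.prod_one_add (R := ℤ) (Finset.univ : Finset (Fin n))
    (f := fun i => - (if d i.succ ≤ v i.succ then (1 : ℤ) else 0))
  rw [Finset.powerset_univ] at h
  have h1 : ∀ I : Finset (Fin n), ∏ i ∈ I, (- (if d i.succ ≤ v i.succ then (1 : ℤ) else 0))
      = (-1 : ℤ) ^ I.card * ((if ∀ i ∈ I, d i.succ ≤ v i.succ then 1 else 0 : ℕ) : ℤ) := by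
    intro I
    rw [Finset.prod_neg, Finset.prod_ite_zero]
    simp
  rw [← Finset.sum_congr rfl (fun I _ => h1 I), ← h]
  have h2 : ∀ i : Fin n, (1 + - (if d i.succ ≤ v i.succ then (1 : ℤ) else 0))
      = if v i.succ < d i.succ then 1 else 0 := by
    intro i
    by_cases hi : d i.succ ≤ v i.succ
    · simp [hi]
    · simp [hi, not_le.mp hi]
  rw [Finset.prod_congr rfl (fun i _ => h2 i), Finset.prod_ite_zero]
  simp

/-- The monomial function on the torus as a character. -/
def torusChar {n : ℕ} (F : Type) [Field F] (w v : Fin (n + 1) → ℕ) :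
    (Fin (n + 1) → Fˣ) →* F where
  toFun t := ∏ i, ((t i : F) ^ w i) ^ v i
  map_one' := by simp
  map_mul' := by intro s t; simp [mul_pow, Finset.prod_mul_distrib]

theorem torusChar_inj {n : ℕ} (F : Type) [Field F] [Fintype F] (q : ℕ)
    (hq : Fintype.card F = q) (w : Fin (n + 1) → ℕ) (d : Fin (n + 1) → ℕ)
    (hd : ∀ i, d i = (q - 1) / Nat.gcd (q - 1) (w i)) (u v : Fin (n + 1) → ℕ)
    (h : torusChar F w u = torusChar F w v) (i : Fin (n + 1)) : u i ≡ v i [MOD d i] := by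
  classical
  obtain ⟨g, hg⟩ := IsCyclic.exists_generator (α := Fˣ)
  have hord : orderOf g = q - 1 := by
    rw [orderOf_eq_card_of_forall_mem_zpowers hg, Nat.card_eq_fintype_card,
      Fintype.card_units, hq]
  have key : ∀ v : Fin (n + 1) → ℕ,
      torusChar F w v (Pi.mulSingle i g) = ((g ^ (w i * v i) : Fˣ) : F) := by
    intro v
    show ∏ j, (((Pi.mulSingle i g : Fin (n + 1) → Fˣ) j : F) ^ w j) ^ v j = _
    rw [Finset.prod_eq_single i]
    · simp [pow_mul]
    · intro j _ hj
      simp [Pi.mulSingle_eq_of_ne hj]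
    · simp
  have h1 := DFunLike.congr_fun h (Pi.mulSingle i g)
  rw [key, key] at h1
  have h2 := pow_eq_pow_iff_modEq.mp (Units.ext h1)
  rw [hord] at h2
  have hq1 : 0 < q - 1 := by
    have := Fintype.one_lt_card (α := F)
    omega
  rw [hd]
  exact Nat.ModEq.cancel_left_div_gcd hq1 h2

theorem reduce_exp {n : ℕ} (q : ℕ) (hq1 : 0 < q - 1)
    (w : Fin (n + 1) → ℕ) (hw0 : w 0 ∣ q - 1) (d : Fin (n + 1) → ℕ)
    (hd : ∀ i, d i = (q - 1) / Nat.gcd (q - 1) (w i)) (v : Fin (n + 1) → ℕ) :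
    ∃ u : Fin (n + 1) → ℕ, ∑ i, u i * w i = ∑ i, v i * w i ∧
      (∀ i : Fin n, u i.succ < d i.succ) ∧ ∀ i, u i ≡ v i [MOD d i] := by
  have hdpos : ∀ i, 0 < d i := fun i => by
    rw [hd]
    exact Nat.div_pos (Nat.le_of_dvd hq1 (Nat.gcd_dvd_left _ _)) (Nat.gcd_pos_of_pos_left _ hq1)
  have h0 : d 0 * w 0 = q - 1 := by
    rw [hd, Nat.gcd_eq_right hw0, Nat.div_mul_cancel hw0]
  have hdw : ∀ i, ∃ k, d i * w i = k * (d 0 * w 0) := fun i => by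
    rw [h0]
    refine ⟨w i / Nat.gcd (q - 1) (w i), ?_⟩
    rw [hd]
    obtain ⟨a, ha⟩ := Nat.gcd_dvd_left (q - 1) (w i)
    obtain ⟨b, hb⟩ := Nat.gcd_dvd_right (q - 1) (w i)
    have hg := Nat.gcd_pos_of_pos_left (w i) hq1
    set g := Nat.gcd (q - 1) (w i)
    have e1 : (q - 1) / g = a := by rw [ha]; exact Nat.mul_div_cancel_left _ hg
    have e2 : w i / g = b := by rw [hb]; exact Nat.mul_div_cancel_left _ hg
    rw [e1, e2, ha, hb]; ring
  choose k hk using hdw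
  refine ⟨Fin.cons (v 0 + d 0 * ∑ i : Fin n, (v i.succ / d i.succ) * k i.succ)
    (fun i => v i.succ % d i.succ), ?_, ?_, ?_⟩
  · rw [Fin.sum_univ_succ, Fin.sum_univ_succ]
    simp only [Fin.cons_zero, Fin.cons_succ]
    rw [add_mul, add_assoc]
    congr 1
    rw [Finset.mul_sum, Finset.sum_mul, ← Finset.sum_add_distrib]
    refine Finset.sum_congr rfl fun i _ => ?_
    conv_rhs => rw [← Nat.div_add_mod (v i.succ) (d i.succ)]
    have := hk i.succ
    calc _ = (v i.succ / d i.succ) * (k i.succ * (d 0 * w 0))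
          + v i.succ % d i.succ * w i.succ := by ring
      _ = _ := by rw [← this]; ring
  · intro i
    simpa using Nat.mod_lt _ (hdpos i.succ)
  · intro i
    refine Fin.cases ?_ (fun j => ?_) i
    · simp [Nat.ModEq]
    · simp [Nat.ModEq]

theorem finrank_code {n : ℕ} (F : Type) [Field F] [Fintype F] (q : ℕ) (hq : Fintype.card F = q)
    (w : Fin (n + 1) → ℕ) (hw : ∀ i, 0 < w i) (hw0 : w 0 ∣ q - 1)
    (d : Fin (n + 1) → ℕ)
    (hd : ∀ i, d i = (q - 1) / Nat.gcd (q - 1) (w i))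
    (A : Set (Fin (n + 1) → F))
    (hA : A = {y | ∃ t : Fin (n + 1) → Fˣ, y = fun i => (t i : F) ^ w i})
    (α : ℕ) :
    Module.finrank F (code F w α A) =
      ((expSet w α).filter (fun v => ∀ i : Fin n, v i.succ < d i.succ)).card := by
  classical
  have hq1 : 0 < q - 1 := by
    have := Fintype.one_lt_card (α := F)
    omega
  set M := (expSet w α).filter (fun v => ∀ i : Fin n, v i.succ < d i.succ) with hM
  let f : (Fin (n + 1) → ℕ) → (A → F) := fun v y => ∏ i, y.val i ^ v i
  have hf : ∀ (v : Fin (n + 1) →₀ ℕ) (c : F), evalOn F A (monomial v c) = c • f v := by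
    intro v c
    funext y
    show eval y.val (monomial v c) = c * ∏ i, y.val i ^ v i
    rw [eval_monomial, Finsupp.prod_fintype _ _ (by simp)]
  have hwt : ∀ v : Fin (n + 1) →₀ ℕ, Finsupp.weight w v = ∑ i, v i * w i := by
    intro v
    rw [Finsupp.weight_apply, Finsupp.sum_fintype _ _ (by simp)]
    simp
  have hcongr : ∀ u v : Fin (n + 1) → ℕ, (∀ i, u i ≡ v i [MOD d i]) → f u = f v := by
    intro u v h
    funext y
    obtain ⟨y, hy⟩ := y
    rw [hA] at hy
    obtain ⟨t, rfl⟩ := hy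
    refine Finset.prod_congr rfl fun i _ => ?_
    have : (t i ^ w i) ^ u i = (t i ^ w i) ^ v i := by
      rw [pow_eq_pow_iff_modEq]
      refine (h i).of_dvd ?_
      rw [orderOf_dvd_iff_pow_eq_one, ← pow_mul]
      have hdvd : q - 1 ∣ w i * d i := by
        rw [hd]
        obtain ⟨b, hb⟩ := Nat.gcd_dvd_right (q - 1) (w i)
        refine ⟨b, ?_⟩
        set g := Nat.gcd (q - 1) (w i)
        rw [hb]
        have := Nat.mul_div_cancel' (Nat.gcd_dvd_left (q - 1) (w i))
        calc _ = (g * ((q - 1) / g)) * b := by ring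
          _ = _ := by rw [this]
      obtain ⟨c, hc⟩ := hdvd
      rw [hc, pow_mul, ← hq, ← Fintype.card_units, pow_card_eq_one, one_pow]
    simpa using congrArg (Units.val) this
  have hspan : code F w α A = Submodule.span F (Set.range (fun v : M => f v)) := by
    unfold code
    apply le_antisymm
    · rw [Submodule.map_le_iff_le_comap]
      intro p hp
      rw [Submodule.mem_comap, p.as_sum, map_sum]
      refine Submodule.sum_mem _ fun v hv => ?_
      rw [hf]
      refine Submodule.smul_mem _ _ ?_
      have hv' : Finsupp.weight w v = α := hp (mem_support_iff.mp hv)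
      obtain ⟨u, hu1, hu2, hu3⟩ := reduce_exp q hq1 w hw0 d hd v
      rw [← hcongr u v hu3]
      refine Submodule.subset_span ⟨⟨u, ?_⟩, rfl⟩
      rw [hM, Finset.mem_filter, mem_expSet w hw, hu1, ← hwt]
      exact ⟨hv', hu2⟩
    · rw [Submodule.span_le]
      rintro _ ⟨⟨v, hv⟩, rfl⟩
      rw [hM, Finset.mem_filter, mem_expSet w hw] at hv
      refine ⟨monomial (Finsupp.equivFunOnFinite.symm v) 1, ?_, ?_⟩
      · refine isWeightedHomogeneous_monomial w _ _ ?_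
        rw [hwt]
        exact hv.1
      · rw [hf, one_smul]
        rfl
  have hlin : LinearIndependent F (fun v : M => f v) := by
    let ι : (Fin (n + 1) → Fˣ) → A := fun t => ⟨fun i => (t i : F) ^ w i, by rw [hA]; exact ⟨t, rfl⟩⟩
    refine LinearIndependent.of_comp (LinearMap.funLeft F F ι) ?_
    have hinj : Function.Injective (fun v : M => torusChar F w v) := by
      rintro ⟨u, hu⟩ ⟨v, hv⟩ h
      rw [hM, Finset.mem_filter, mem_expSet w hw] at hu hv
      have hmod := torusChar_inj F q hq w d hd u v h
      have hs : ∀ i : Fin n, u i.succ = v i.succ := fun i =>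
        (hmod i.succ).eq_of_lt_of_lt (hu.2 i) (hv.2 i)
      have h0 : u 0 = v 0 := by
        have := hu.1.trans hv.1.symm
        rw [Fin.sum_univ_succ, Fin.sum_univ_succ] at this
        simp only [hs] at this
        exact Nat.eq_of_mul_eq_mul_right (hw 0) (Nat.add_right_cancel this)
      apply Subtype.ext
      funext i
      exact Fin.cases h0 hs i
    exact (linearIndependent_monoidHom (Fin (n + 1) → Fˣ) F).comp _ hinj
  rw [hspan, finrank_span_eq_card hlin, Fintype.card_coe]

/-- With `q` the cardinality of a finite field `𝔽`, positive weights
`w 0, …, w n` with `w 0 ∣ q - 1`, `d i = (q-1)/gcd(q-1, w i)`, and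
`A = {(t₀^{w₀}, …, tₙ^{wₙ}) : tᵢ ∈ 𝔽ˣ}`, the rank of the evaluation map
`ev_A : S_α → (A → 𝔽)` equals the alternating sum
`∑_{I ⊆ {1,…,n}} (-1)^{|I|} D(α - ∑_{i ∈ I} dᵢ wᵢ)`. -/
theorem stmt2 (n : ℕ) (F : Type) [Field F] [Fintype F] (q : ℕ) (hq : Fintype.card F = q)
    (w : Fin (n + 1) → ℕ) (hw : ∀ i, 0 < w i) (hw0 : w 0 ∣ q - 1)
    (d : Fin (n + 1) → ℕ)
    (hd : ∀ i, d i = (q - 1) / Nat.gcd (q - 1) (w i))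
    (A : Set (Fin (n + 1) → F))
    (hA : A = {y | ∃ t : Fin (n + 1) → Fˣ, y = fun i => (t i : F) ^ w i})
    (α : ℕ) :
    (Module.finrank F (code F w α A) : ℤ) =
      ∑ I : Finset (Fin n), (-1 : ℤ) ^ I.card *
        (numMonomials w ((α : ℤ) - ∑ i ∈ I, (d i.succ : ℤ) * (w i.succ : ℤ)) : ℤ) := by
  rw [finrank_code F q hq w hw hw0 d hd A hA α, incl_excl]
  refine Finset.sum_congr rfl fun I _ => ?_
  rw [numMonomials_eq w hw α d I]
end

section
/- Let q be a prime power and let w_1, …, w_n be positive integers; use weights (1, w_1, …, w_n) on 𝔽_q[x_0,…,x_n]. For 1 ≤ i ≤ n set d_i = (q−1)/gcd(q−1, w_i), and let Y = {(1, s_1^{w_1}, …, s_n^{w_n}) : s_1,…,s_n ∈ 𝔽_q^×} ⊆ 𝔽_q^{n+1}. Then for every α ∈ ℕ, the evaluation map ev_Y : S_α → (Y → 𝔽_q) is surjective if and only if α ≥ (d_1−1)w_1 + ⋯ + (d_n−1)w_n. (Equivalently, the a-invariant of Y is (d_1−1)w_1 + ⋯ + (d_n−1)w_n − 1.) -/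
open MvPolynomial

/-- The subgroup of `w`-th powers of units. -/
noncomputable def powSub (F : Type) [Field F] (w : ℕ) : Subgroup Fˣ :=
  (powMonoidHom w : Fˣ →* Fˣ).range

lemma powSub_card (F : Type) [Field F] [Fintype F] (w : ℕ) :
    Nat.card (powSub F w) = (Fintype.card F - 1) / Nat.gcd (Fintype.card F - 1) w := by
  classical
  rw [powSub, IsCyclic.card_powMonoidHom_range, Nat.card_eq_fintype_card, Fintype.card_units]

lemma powSub_sum (F : Type) [Field F] [Fintype F] (H : Subgroup Fˣ) [Fintype H] (k : ℕ)
    (hk : ¬ Nat.card H ∣ k) : ∑ b : H, ((b : Fˣ) : F) ^ k = 0 := by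
  classical
  let f : H →* F := ((Units.coeHom F).comp H.subtype).comp (powMonoidHom k)
  have h := sum_hom_units f
  rw [if_neg] at h
  · simpa [f] using h
  · intro hf
    apply hk
    rw [← IsCyclic.exponent_eq_card]
    apply Monoid.exponent_dvd_of_forall_pow_eq_one
    intro g
    have := DFunLike.congr_fun hf g
    apply Subtype.ext
    apply Units.ext
    simpa [f] using this

/-- With `q` the cardinality of a finite field `𝔽`, positive integers
`w 1, …, w n`, weights `(1, w₁, …, wₙ)` on `𝔽[x₀, …, xₙ]`,
`d i = (q-1)/gcd(q-1, w i)` and `Y = {(1, s₁^{w₁}, …, sₙ^{wₙ}) : sᵢ ∈ 𝔽ˣ}`,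
the evaluation map `ev_Y : S_α → (Y → 𝔽)` is surjective iff
`α ≥ (d₁-1)w₁ + ⋯ + (dₙ-1)wₙ`. -/
theorem stmt3 (n : ℕ) (F : Type) [Field F] [Fintype F] (q : ℕ) (hq : Fintype.card F = q)
    (w : Fin n → ℕ) (hw : ∀ i, 0 < w i)
    (d : Fin n → ℕ) (hd : ∀ i, d i = (q - 1) / Nat.gcd (q - 1) (w i))
    (Y : Set (Fin (n + 1) → F))
    (hY : Y = {y | ∃ s : Fin n → Fˣ, y = Fin.cons 1 fun i => (s i : F) ^ w i})
    (α : ℕ) :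
    Function.Surjective
        (fun P : (weightedHomogeneousSubmodule F (Fin.cons 1 w) α) => evalOn F Y P.val) ↔
      (∑ i, (d i - 1) * w i) ≤ α := by
  classical
  have hcard : ∀ i, Nat.card (powSub F (w i)) = d i := by
    intro i; rw [powSub_card, hd, hq]
  let _ : ∀ i, Fintype (powSub F (w i)) := fun i => Fintype.ofFinite _
  have hmem : ∀ h : (∀ i, powSub F (w i)),
      (Fin.cons 1 (fun i => ((h i : Fˣ) : F)) : Fin (n + 1) → F) ∈ Y := by
    intro h
    rw [hY]
    choose s hs using fun i => (h i).2
    refine ⟨s, ?_⟩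
    congr 1
    funext i
    rw [← hs i]
    simp
  have hmem' : ∀ y ∈ Y, ∃ h : (∀ i, powSub F (w i)),
      y = (Fin.cons 1 (fun i => ((h i : Fˣ) : F)) : Fin (n + 1) → F) := by
    intro y hy
    rw [hY] at hy
    obtain ⟨s, rfl⟩ := hy
    exact ⟨fun i => ⟨s i ^ w i, s i, rfl⟩, by simp⟩
  constructor
  · intro hs
    by_contra! hlt
    obtain ⟨⟨P, hP⟩, hPe⟩ := hs (Pi.single ⟨_, hmem 1⟩ 1)
    rw [mem_weightedHomogeneousSubmodule] at hP
    have key : ∑ h : (∀ i, powSub F (w i)), (∏ i, ((h i : Fˣ) : F)) *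
        eval (Fin.cons 1 (fun i => ((h i : Fˣ) : F)) : Fin (n + 1) → F) P = 0 := by
      simp_rw [eval_eq', Finset.mul_sum]
      rw [Finset.sum_comm]
      apply Finset.sum_eq_zero
      intro m hm
      have hwt := hP (mem_support_iff.mp hm)
      have hex : ∃ i : Fin n, ¬ d i ∣ m i.succ + 1 := by
        by_contra! hall
        apply absurd hlt
        rw [not_lt, ← hwt, Finsupp.weight_apply, Finsupp.sum_fintype _ _ (by simp),
          Fin.sum_univ_succ]
        simp only [Fin.cons_succ, smul_eq_mul]
        refine le_trans (Finset.sum_le_sum fun i _ => ?_) (Nat.le_add_left _ _)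
        have := Nat.le_of_dvd (by omega) (hall i)
        exact Nat.mul_le_mul_right _ (by omega)
      obtain ⟨i, hi⟩ := hex
      have h0 : ∏ j, ∑ b : powSub F (w j), ((b : Fˣ) : F) ^ (m j.succ + 1) = 0 := by
        apply Finset.prod_eq_zero (Finset.mem_univ i)
        apply powSub_sum
        rwa [hcard]
      rw [Fintype.prod_sum] at h0
      calc _ = coeff m P * ∑ x : (∀ i, powSub F (w i)),
            ∏ i, ((x i : Fˣ) : F) ^ (m i.succ + 1) := by
            rw [Finset.mul_sum]
            refine Finset.sum_congr rfl fun x _ => ?_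
            rw [Fin.prod_univ_succ]
            simp only [Fin.cons_zero, Fin.cons_succ, one_pow, one_mul, pow_succ,
              Finset.prod_mul_distrib]
            ring
        _ = 0 := by rw [h0, mul_zero]
    rw [Finset.sum_eq_single 1] at key
    · have := congrFun hPe ⟨_, hmem 1⟩
      simp only [Pi.single_eq_same] at this
      change eval _ P = 1 at this
      rw [this] at key
      simp at key
    · intro h _ hne
      have := congrFun hPe ⟨_, hmem h⟩
      rw [Pi.single_eq_of_ne] at this
      · change eval _ P = 0 at this
        rw [this, mul_zero]
      · intro he
        apply hne
        funext i
        exact Subtype.ext (Units.ext (by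
          simpa using congrFun (congrArg Subtype.val he) i.succ))
    · simp
  · intro hle f
    let Q : (∀ i, powSub F (w i)) → MvPolynomial (Fin (n + 1)) F := fun a =>
      X 0 ^ (α - ∑ i, (d i - 1) * w i) *
        ∏ i, ∏ b ∈ Finset.univ.erase (a i), (X i.succ - C ((b : Fˣ) : F) * X 0 ^ w i)
    have hQ : ∀ a, IsWeightedHomogeneous (Fin.cons 1 w : Fin (n + 1) → ℕ) (Q a) α := by
      intro a
      have h1 : IsWeightedHomogeneous (Fin.cons 1 w : Fin (n + 1) → ℕ)
          (X 0 ^ (α - ∑ i, (d i - 1) * w i) : MvPolynomial (Fin (n + 1)) F)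
          (α - ∑ i, (d i - 1) * w i) := by
        simpa using (isWeightedHomogeneous_X F (Fin.cons 1 w : Fin (n + 1) → ℕ) 0).pow
          (α - ∑ i, (d i - 1) * w i)
      have h2 : IsWeightedHomogeneous (Fin.cons 1 w : Fin (n + 1) → ℕ)
          (∏ i, ∏ b ∈ Finset.univ.erase (a i),
            (X i.succ - C ((b : Fˣ) : F) * X 0 ^ w i) : MvPolynomial (Fin (n + 1)) F)
          (∑ i, (d i - 1) * w i) := by
        apply IsWeightedHomogeneous.prod
        intro i _
        have : (d i - 1) * w i = ∑ b ∈ Finset.univ.erase (a i), w i := by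
          rw [Finset.sum_const, Finset.card_erase_of_mem (Finset.mem_univ _), Finset.card_univ,
            ← Nat.card_eq_fintype_card, hcard, smul_eq_mul]
        rw [this]
        apply IsWeightedHomogeneous.prod
        intro b _
        rw [← mem_weightedHomogeneousSubmodule]
        apply Submodule.sub_mem
        · rw [mem_weightedHomogeneousSubmodule]
          simpa using isWeightedHomogeneous_X F (Fin.cons 1 w : Fin (n + 1) → ℕ) i.succ
        · rw [mem_weightedHomogeneousSubmodule]
          simpa using (isWeightedHomogeneous_C (Fin.cons 1 w : Fin (n + 1) → ℕ)
            ((b : Fˣ) : F)).mul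
            ((isWeightedHomogeneous_X F (Fin.cons 1 w : Fin (n + 1) → ℕ) 0).pow (w i))
      have h3 := h1.mul h2
      rwa [Nat.sub_add_cancel hle] at h3
    have hev : ∀ a h : (∀ i, powSub F (w i)), eval (Fin.cons 1 (fun i => ((h i : Fˣ) : F)) : Fin (n + 1) → F) (Q a) =
        ∏ i, ∏ b ∈ Finset.univ.erase (a i), (((h i : Fˣ) : F) - ((b : Fˣ) : F)) := by
      intro a h
      simp [Q, map_prod]
    have hself : ∀ a : (∀ i, powSub F (w i)), eval (Fin.cons 1 (fun i => ((a i : Fˣ) : F)) : Fin (n + 1) → F) (Q a)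
        ≠ 0 := by
      intro a
      rw [hev]
      refine Finset.prod_ne_zero_iff.mpr fun i _ => Finset.prod_ne_zero_iff.mpr fun b hb => ?_
      rw [sub_ne_zero]
      intro he
      exact (Finset.ne_of_mem_erase hb) (Subtype.ext (Units.ext he.symm))
    have hoth : ∀ a h : (∀ i, powSub F (w i)), h ≠ a →
        eval (Fin.cons 1 (fun i => ((h i : Fˣ) : F)) : Fin (n + 1) → F) (Q a) = 0 := by
      intro a h hne
      rw [hev]
      obtain ⟨i, hi⟩ := Function.ne_iff.mp hne
      refine Finset.prod_eq_zero (Finset.mem_univ i) ?_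
      exact Finset.prod_eq_zero (Finset.mem_erase.mpr ⟨hi, Finset.mem_univ _⟩) (sub_self _)
    refine ⟨⟨∑ a, (f ⟨_, hmem a⟩ *
      (eval (Fin.cons 1 (fun i => ((a i : Fˣ) : F)) : Fin (n + 1) → F) (Q a))⁻¹) • Q a, ?_⟩, ?_⟩
    · exact Submodule.sum_mem _ fun a _ => Submodule.smul_mem _ _ (hQ a)
    · funext ⟨y, hy⟩
      obtain ⟨h, rfl⟩ := hmem' y hy
      change eval _ (∑ a, _) = _
      rw [map_sum, Finset.sum_eq_single h]
      · rw [smul_eval, mul_assoc, inv_mul_cancel₀ (hself h), mul_one]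
      · intro a _ hne
        rw [smul_eval, hoth a h hne.symm, mul_zero]
      · simp
end

section
/- Let q be a prime power and let w_1, …, w_n be positive integers; use weights (1, w_1, …, w_n) on 𝔽_q[x_0,…,x_n]. For 1 ≤ i ≤ n set d_i = (q−1)/gcd(q−1, w_i), and let Y = {(1, s_1^{w_1}, …, s_n^{w_n}) : s_1,…,s_n ∈ 𝔽_q^×} ⊆ 𝔽_q^{n+1}. Then for every α ∈ ℕ, the rank over 𝔽_q of the evaluation map ev_Y : S_α → (Y → 𝔽_q) (i.e., the dimension of the code C_{α,Y}) equals the number of tuples (m_1,…,m_n) ∈ ℕ^n with m_i ≤ d_i − 1 for all i and m_1 w_1 + ⋯ + m_n w_n ≤ α. -/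
open MvPolynomial

theorem aux_mod {F : Type} [Field F] [Fintype F] (w d : ℕ)
    (hd : d = (Fintype.card F - 1) / Nat.gcd (Fintype.card F - 1) w) (s : F) (hs : s ≠ 0) (m : ℕ) :
    (s ^ w) ^ (m % d) = (s ^ w) ^ m := by
  have h1 : (s ^ w) ^ d = 1 := by
    rw [← pow_mul]
    have : Fintype.card F - 1 ∣ w * d := by
      obtain ⟨k, hk⟩ := Nat.gcd_dvd_right (Fintype.card F - 1) w
      have h2 := Nat.div_mul_cancel (Nat.gcd_dvd_left (Fintype.card F - 1) w)
      rw [← hd] at h2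
      refine ⟨k, ?_⟩
      calc w * d = (Nat.gcd (Fintype.card F - 1) w * k) * d := by rw [← hk]
        _ = (d * Nat.gcd (Fintype.card F - 1) w) * k := by ring
        _ = _ := by rw [h2]
    obtain ⟨k, hk⟩ := this
    rw [hk, pow_mul, FiniteField.pow_card_sub_one_eq_one s hs, one_pow]
  conv_rhs => rw [← Nat.mod_add_div m d, pow_add, pow_mul, h1, one_pow, mul_one]

theorem aux_inj {F : Type} [Field F] [Fintype F] (w d : ℕ)
    (hd : d = (Fintype.card F - 1) / Nat.gcd (Fintype.card F - 1) w) (a b : ℕ)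
    (ha : a < d) (hb : b < d)
    (h : ∀ s : Fˣ, ((s : F) ^ w) ^ a = ((s : F) ^ w) ^ b) : a = b := by
  obtain ⟨g, hg⟩ := IsCyclic.exists_generator (α := Fˣ)
  have ho : orderOf g = Fintype.card F - 1 := by
    classical
    rw [orderOf_eq_card_of_forall_mem_zpowers hg, Nat.card_eq_fintype_card, Fintype.card_units]
  have h1 : g ^ (w * a) = g ^ (w * b) := by
    ext
    simpa [pow_mul] using h g
  rw [pow_eq_pow_iff_modEq, ho] at h1
  have hpos : 0 < Fintype.card F - 1 := by
    have := Fintype.one_lt_card (α := F); omega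
  have h2 := Nat.ModEq.cancel_left_div_gcd hpos h1
  rw [← hd] at h2
  exact Nat.ModEq.eq_of_lt_of_lt h2 ha hb

/-- With `q` the cardinality of a finite field `𝔽`, positive integers
`w 1, …, w n`, weights `(1, w₁, …, wₙ)` on `𝔽[x₀, …, xₙ]`,
`d i = (q-1)/gcd(q-1, w i)` and `Y = {(1, s₁^{w₁}, …, sₙ^{wₙ}) : sᵢ ∈ 𝔽ˣ}`,
the dimension of the code `C_{α,Y}` equals the number of tuples
`(m₁, …, mₙ) ∈ ℕⁿ` with `mᵢ ≤ dᵢ - 1` and `m₁w₁ + ⋯ + mₙwₙ ≤ α`. -/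
theorem stmt5 (n : ℕ) (F : Type) [Field F] [Fintype F] (q : ℕ) (hq : Fintype.card F = q)
    (w : Fin n → ℕ) (hw : ∀ i, 0 < w i)
    (d : Fin n → ℕ) (hd : ∀ i, d i = (q - 1) / Nat.gcd (q - 1) (w i))
    (Y : Set (Fin (n + 1) → F))
    (hY : Y = {y | ∃ s : Fin n → Fˣ, y = Fin.cons 1 fun i => (s i : F) ^ w i})
    (α : ℕ) :
    Module.finrank F (code F (Fin.cons 1 w) α Y) =
      Nat.card {m : Fin n → ℕ // (∀ i, m i ≤ d i - 1) ∧ (∑ i, m i * w i) ≤ α} := by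
  subst hq
  have hpos : 0 < Fintype.card F - 1 := by
    have := Fintype.one_lt_card (α := F); omega
  have hdpos : ∀ i, 0 < d i := fun i => by
    rw [hd i]
    exact Nat.div_pos (Nat.le_of_dvd hpos (Nat.gcd_dvd_left _ _)) (Nat.gcd_pos_of_pos_left _ hpos)
  set T := {m : Fin n → ℕ // (∀ i, m i ≤ d i - 1) ∧ (∑ i, m i * w i) ≤ α} with hT
  have : Finite T := by
    apply Set.Finite.to_subtype
    exact (Set.finite_Iic (fun i => d i - 1)).subset (fun m hm i => hm.1 i)
  have : Fintype T := Fintype.ofFinite T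
  let v : T → (Y → F) := fun m y => ∏ i, (y.1 i.succ) ^ (m.1 i)
  have hmem : ∀ s : Fin n → Fˣ, (Fin.cons 1 fun i => (s i : F) ^ w i : Fin (n + 1) → F) ∈ Y := by
    intro s; rw [hY]; exact ⟨s, rfl⟩
  have hli : LinearIndependent F v := by
    let L : (Y → F) →ₗ[F] ((Fin n → Fˣ) → F) :=
      LinearMap.funLeft F F (fun s => ⟨_, hmem s⟩)
    apply LinearIndependent.of_comp L
    let χ : T → ((Fin n → Fˣ) →* F) := fun m =>
      { toFun := fun s => ∏ i, ((s i : F) ^ w i) ^ m.1 i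
        map_one' := by simp
        map_mul' := by intro s t; simp [mul_pow, Finset.prod_mul_distrib] }
    have hχ : Function.Injective χ := by
      intro a b hab
      ext i
      refine aux_inj (F := F) (w i) (d i) (hd i) _ _ ?_ ?_ ?_
      · have := a.2.1 i; have := hdpos i; omega
      · have := b.2.1 i; have := hdpos i; omega
      · intro s
        have h := DFunLike.congr_fun hab (Pi.mulSingle i s)
        have key : ∀ m : T, χ m (Pi.mulSingle i s) = ((s : F) ^ w i) ^ m.1 i := by
          intro m
          change ∏ j, (((Pi.mulSingle i s : Fin n → Fˣ) j : F) ^ w j) ^ m.1 j = _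
          rw [Finset.prod_eq_single i]
          · simp
          · intro j _ hj
            simp [Pi.mulSingle_eq_of_ne hj]
          · simp
        rwa [key, key] at h
    have h := (linearIndependent_monoidHom (Fin n → Fˣ) F).comp χ hχ
    have hLv : L ∘ v = (fun f : (Fin n → Fˣ) →* F => (f : (Fin n → Fˣ) → F)) ∘ χ := by
      funext m s
      simp [L, v, χ, LinearMap.funLeft]
    rw [hLv]
    exact h
  have hmon : ∀ (a : Fin (n + 1) →₀ ℕ) (c : F) (y : Y),
      evalOn F Y (monomial a c) y = c * ∏ i : Fin n, (y.1 i.succ) ^ (a i.succ) := by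
    intro a c y
    have hy0 : y.1 0 = 1 := by
      obtain ⟨s, hs⟩ := hY.subset y.2
      rw [hs]; simp
    change eval y.1 (monomial a c) = _
    rw [eval_monomial, Finsupp.prod_fintype _ _ (by simp), Fin.prod_univ_succ, hy0]
    simp
  have hwt : ∀ a : Fin (n + 1) →₀ ℕ, Finsupp.weight (Fin.cons 1 w : Fin (n + 1) → ℕ) a
      = a 0 + ∑ i : Fin n, a i.succ * w i := by
    intro a
    rw [Finsupp.weight_apply, Finsupp.sum_fintype _ _ (by simp), Fin.sum_univ_succ]
    simp
  have hspan : code F (Fin.cons 1 w) α Y = Submodule.span F (Set.range v) := by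
    apply le_antisymm
    · rintro _ ⟨P, hP, rfl⟩
      rw [← support_sum_monomial_coeff P, map_sum]
      refine Submodule.sum_mem _ fun a ha => ?_
      have hw' := hP (mem_support_iff.mp ha)
      rw [hwt] at hw'
      have hm : (∀ i, a i.succ % d i ≤ d i - 1) ∧ (∑ i : Fin n, (a i.succ % d i) * w i) ≤ α := by
        refine ⟨fun i => Nat.le_sub_one_of_lt (Nat.mod_lt _ (hdpos i)), ?_⟩
        have : ∑ i : Fin n, (a i.succ % d i) * w i ≤ ∑ i : Fin n, a i.succ * w i :=
          Finset.sum_le_sum fun i _ => Nat.mul_le_mul_right _ (Nat.mod_le _ _)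
        omega
      have : evalOn F Y (monomial a (coeff a P)) =
          coeff a P • v ⟨fun i => a i.succ % d i, hm⟩ := by
        funext y
        rw [hmon]
        simp only [Pi.smul_apply, smul_eq_mul, v]
        congr 1
        refine Finset.prod_congr rfl fun i _ => ?_
        obtain ⟨s, hs⟩ := hY.subset y.2
        rw [hs]
        simp only [Fin.cons_succ]
        exact (aux_mod (w i) (d i) (hd i) (s i : F) (s i).ne_zero _).symm
      rw [this]
      exact Submodule.smul_mem _ _ (Submodule.subset_span ⟨_, rfl⟩)
    · rw [Submodule.span_le]
      rintro _ ⟨m, rfl⟩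
      refine ⟨monomial (Finsupp.equivFunOnFinite.symm
        (Fin.cons (α - ∑ i, m.1 i * w i) m.1 : Fin (n + 1) → ℕ)) 1, ?_, ?_⟩
      · apply isWeightedHomogeneous_monomial
        rw [hwt]
        have := m.2.2
        simp
        omega
      · funext y
        rw [hmon]
        simp [v]
  rw [hspan, finrank_span_eq_card hli, Nat.card_eq_fintype_card]
end

section
/- Let q be a prime power and let w_1, …, w_n be positive integers; use weights (1, w_1, …, w_n) on 𝔽_q[x_0,…,x_n]. For 1 ≤ i ≤ n set d_i = (q−1)/gcd(q−1, w_i), and let Y = {(1, s_1^{w_1}, …, s_n^{w_n}) : s_1,…,s_n ∈ 𝔽_q^×} ⊆ 𝔽_q^{n+1}. Fix α ∈ ℕ and let M be the set of tuples (m_0, m_1, …, m_n) ∈ ℕ^{n+1} with m_0 + m_1 w_1 + ⋯ + m_n w_n = α and m_i ≤ d_i − 1 for all 1 ≤ i ≤ n. Then the family of functions Y → 𝔽_q obtained by evaluating the monomials x_0^{m_0} x_1^{m_1} ⋯ x_n^{m_n}, (m_0,…,m_n) ∈ M, at the points of Y is linearly independent over 𝔽_q and spans the code C_{α,Y}. 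-/
open MvPolynomial

lemma evalOn_mono {n : ℕ} {F : Type} [Field F] (Y : Set (Fin (n + 1) → F)) (m : Fin (n + 1) →₀ ℕ)
    (c : F) (y : Y) :
    evalOn F Y (monomial m c) y = c * (y.val 0 ^ m 0 * ∏ i : Fin n, y.val i.succ ^ m i.succ) := by
  show eval y.val (monomial m c) = _
  rw [eval_monomial, Finsupp.prod_fintype _ _ (by simp), Fin.prod_univ_succ]

/-- With `q` the cardinality of a finite field `𝔽`, positive integers
`w 1, …, w n`, weights `(1, w₁, …, wₙ)` on `𝔽[x₀, …, xₙ]`,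
`d i = (q-1)/gcd(q-1, w i)` and `Y = {(1, s₁^{w₁}, …, sₙ^{wₙ}) : sᵢ ∈ 𝔽ˣ}`, and `M`
the set of exponent vectors `m` with `m₀ + m₁w₁ + ⋯ + mₙwₙ = α` and `mᵢ ≤ dᵢ - 1`
for `1 ≤ i ≤ n`, the family of functions `Y → 𝔽` obtained by evaluating the
monomials `x^m`, `m ∈ M`, is linearly independent and spans the code `C_{α,Y}`. -/
theorem stmt6 (n : ℕ) (F : Type) [Field F] [Fintype F] (q : ℕ) (hq : Fintype.card F = q)
    (w : Fin n → ℕ) (hw : ∀ i, 0 < w i)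
    (d : Fin n → ℕ) (hd : ∀ i, d i = (q - 1) / Nat.gcd (q - 1) (w i))
    (Y : Set (Fin (n + 1) → F))
    (hY : Y = {y | ∃ s : Fin n → Fˣ, y = Fin.cons 1 fun i => (s i : F) ^ w i})
    (α : ℕ)
    (M : Set (Fin (n + 1) →₀ ℕ))
    (hM : M = {m | (∑ i, m i * (Fin.cons 1 w : Fin (n + 1) → ℕ) i) = α ∧ ∀ i : Fin n, m i.succ ≤ d i - 1}) :
    LinearIndependent F (fun m : M => evalOn F Y (monomial m.val (1 : F))) ∧
      Submodule.span F (Set.range fun m : M => evalOn F Y (monomial m.val (1 : F))) =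
        code F (Fin.cons 1 w) α Y := by
  have hq1 : 0 < q - 1 := by
    have := Fintype.one_lt_card (α := F)
    omega
  have hdpos : ∀ i, 0 < d i := by
    intro i
    rw [hd]
    exact Nat.div_pos (Nat.le_of_dvd hq1 (Nat.gcd_dvd_left _ _)) (Nat.gcd_pos_of_pos_left _ hq1)
  have hcardU : Nat.card Fˣ = q - 1 := by
    rw [Nat.card_units, Nat.card_eq_fintype_card, hq]
  have hpow : ∀ (i : Fin n) (s : Fˣ), (s ^ w i) ^ d i = 1 := by
    intro i s
    have h1 : (q - 1) ∣ w i * d i := by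
      rw [hd]
      obtain ⟨a, ha⟩ := Nat.gcd_dvd_right (q - 1) (w i)
      obtain ⟨b, hb⟩ := Nat.gcd_dvd_left (q - 1) (w i)
      refine ⟨a, ?_⟩
      rw [← Nat.mul_div_assoc _ (Nat.gcd_dvd_left _ _)]
      apply Nat.div_eq_of_eq_mul_left (Nat.gcd_pos_of_pos_left _ hq1)
      conv_lhs => rw [ha]
      ring
    rw [← pow_mul]
    obtain ⟨c, hc⟩ := h1
    rw [hc, pow_mul, ← hcardU, pow_card_eq_one', one_pow]
  have hsumM : ∀ m : Fin (n + 1) →₀ ℕ, (∑ i, m i * (Fin.cons 1 w : Fin (n + 1) → ℕ) i)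
      = m 0 + ∑ i : Fin n, m i.succ * w i := by
    intro m
    rw [Fin.sum_univ_succ]
    simp
  have hweight : ∀ m : Fin (n + 1) →₀ ℕ, Finsupp.weight (Fin.cons 1 w : Fin (n + 1) → ℕ) m
      = ∑ i, m i * (Fin.cons 1 w : Fin (n + 1) → ℕ) i := by
    intro m
    rw [Finsupp.weight_apply, Finsupp.sum_fintype _ _ (by simp)]
    simp
  constructor
  · let pt : (Fin n → Fˣ) → Y := fun s =>
      ⟨Fin.cons 1 fun i => (s i : F) ^ w i, by rw [hY]; exact ⟨s, rfl⟩⟩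
    let χ : M → ((Fin n → Fˣ) →* F) := fun m =>
      { toFun := fun s => ∏ i, ((s i : F) ^ w i) ^ m.val i.succ
        map_one' := by simp
        map_mul' := by
          intro s t
          simp [mul_pow, Finset.prod_mul_distrib] }
    have hinj : Function.Injective χ := by
      intro m m' h
      obtain ⟨g, hg⟩ := IsCyclic.exists_generator (α := Fˣ)
      have hord : orderOf g = q - 1 := by
        rw [orderOf_eq_card_of_forall_mem_zpowers hg, hcardU]
      have hs : ∀ i : Fin n, m.val i.succ = m'.val i.succ := by
        intro i
        have h2 := DFunLike.congr_fun h (Pi.mulSingle i g)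
        have key : ∀ k : M, χ k (Pi.mulSingle i g) = ((g : F) ^ w i) ^ k.val i.succ := by
          intro k
          show ∏ j, (((Pi.mulSingle i g : Fin n → Fˣ) j : F) ^ w j) ^ k.val j.succ = _
          rw [Finset.prod_eq_single i]
          · simp
          · intro j _ hj
            simp [Pi.mulSingle_eq_of_ne hj]
          · simp
        rw [key, key] at h2
        have h3 : (g ^ w i) ^ m.val i.succ = (g ^ w i) ^ m'.val i.succ := by
          ext
          push_cast
          exact h2
        have ho : orderOf (g ^ w i) = d i := by
          rw [orderOf_pow, hord, hd]
        have b := (Set.ext_iff.mp hM _).mp m.2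
        have b' := (Set.ext_iff.mp hM _).mp m'.2
        have c := b.2 i
        have c' := b'.2 i
        have := hdpos i
        apply pow_injOn_Iio_orderOf (x := g ^ w i) _ _ h3
        · rw [ho, Set.mem_Iio]; omega
        · rw [ho, Set.mem_Iio]; omega
      have b := (Set.ext_iff.mp hM _).mp m.2
      have b' := (Set.ext_iff.mp hM _).mp m'.2
      have e := b.1.trans b'.1.symm
      rw [hsumM, hsumM] at e
      simp only [hs] at e
      apply Subtype.ext
      ext j
      refine Fin.cases ?_ hs j
      omega
    have hli : LinearIndependent F (fun m : M => (χ m : (Fin n → Fˣ) → F)) :=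
      (linearIndependent_monoidHom (Fin n → Fˣ) F).comp χ hinj
    apply LinearIndependent.of_comp (LinearMap.funLeft F F pt)
    convert hli using 1
    funext m s
    show evalOn F Y (monomial m.val 1) (pt s) = ∏ i, ((s i : F) ^ w i) ^ m.val i.succ
    rw [evalOn_mono]
    simp [pt]
  · apply le_antisymm
    · rw [Submodule.span_le]
      rintro _ ⟨m, rfl⟩
      refine ⟨monomial m.val 1, ?_, rfl⟩
      have b := (Set.ext_iff.mp hM _).mp m.2
      exact isWeightedHomogeneous_monomial _ _ _ ((hweight _).trans b.1)
    · rintro _ ⟨P, hP, rfl⟩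
      rw [← support_sum_monomial_coeff P, map_sum]
      apply Submodule.sum_mem
      intro m hm
      have hmα : Finsupp.weight (Fin.cons 1 w : Fin (n + 1) → ℕ) m = α :=
        hP (mem_support_iff.mp hm)
      rw [hweight, hsumM] at hmα
      let m' : Fin (n + 1) →₀ ℕ := Finsupp.equivFunOnFinite.symm
        (Fin.cons (m 0 + ∑ i : Fin n, (d i * (m i.succ / d i)) * w i) fun i => m i.succ % d i)
      have h0 : m' 0 = m 0 + ∑ i : Fin n, (d i * (m i.succ / d i)) * w i := by simp [m']
      have hs : ∀ i : Fin n, m' i.succ = m i.succ % d i := by intro i; simp [m']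
      have hm'M : m' ∈ M := by
        rw [hM]
        constructor
        · rw [hsumM, h0, ← hmα, add_assoc, ← Finset.sum_add_distrib]
          congr 1
          apply Finset.sum_congr rfl
          intro i _
          rw [hs, ← add_mul, Nat.div_add_mod]
        · intro i
          rw [hs]
          have := Nat.mod_lt (m i.succ) (hdpos i)
          omega
      have heq : evalOn F Y (monomial m (coeff m P)) =
          coeff m P • evalOn F Y (monomial m' (1 : F)) := by
        funext y
        rw [Pi.smul_apply, evalOn_mono, evalOn_mono, smul_eq_mul, one_mul]
        have hy := (Set.ext_iff.mp hY _).mp y.2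
        obtain ⟨s, hy⟩ := hy
        rw [hy]
        simp only [Fin.cons_zero, Fin.cons_succ, one_pow, one_mul]
        congr 1
        apply Finset.prod_congr rfl
        intro i _
        rw [hs]
        have hp : ((s i : F) ^ w i) ^ d i = 1 := by
          have := congrArg (Units.val) (hpow i (s i))
          simpa using this
        conv_lhs => rw [← Nat.div_add_mod (m i.succ) (d i), pow_add, pow_mul, hp, one_pow, one_mul]
      rw [heq]
      exact Submodule.smul_mem _ _ (Submodule.subset_span ⟨⟨m', hm'M⟩, rfl⟩)
end

section
/- Let q be a prime power, a a positive integer, and use weights (1, 1, a) on 𝔽_q[x_0, x_1, x_2]. Set d_2 = (q−1)/gcd(q−1, a) and Y = {(1, t_1, t_2^a) : t_1, t_2 ∈ 𝔽_q^×} ⊆ 𝔽_q^3. If 0 ≤ α ≤ q−2, then the dimension over 𝔽_q of the code C_{α,Y} equals (μ_2 + 1)(α + 1) − a·μ_2(μ_2 + 1)/2, where μ_2 = min(⌊α/a⌋, d_2 − 1). -/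
open MvPolynomial

theorem aux_card_s7 (a α m : ℕ) (h : a * m ≤ α) :
    ((∑ k ∈ Finset.range (m + 1), (α - a * k + 1) : ℕ) : ℤ) =
      (m + 1) * (α + 1) - a * m * (m + 1) / 2 := by
  have key : ∀ m : ℕ, a * m ≤ α →
      2 * ((∑ k ∈ Finset.range (m + 1), (α - a * k + 1) : ℕ) : ℤ) =
      2 * ((m + 1) * (α + 1)) - a * m * (m + 1) := by
    intro m
    induction m with
    | zero => intro _; simp
    | succ n ih =>
      intro h
      have h1 : a * n ≤ α := le_trans (Nat.mul_le_mul_left a (Nat.le_succ n)) h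
      rw [Finset.sum_range_succ]
      have h2 := ih h1
      rw [Nat.cast_add, mul_add, h2]
      push_cast [Nat.cast_sub h]
      ring
  have := key m h
  generalize (a : ℤ) * m * (m + 1) = z at *
  generalize ((m : ℤ) + 1) * (α + 1) = w at *
  omega

theorem aux_dvd {n a k k' : ℕ} (hn : 0 < n) (hk : k < n / Nat.gcd n a)
    (hk' : k' < n / Nat.gcd n a) (h : a * k ≡ a * k' [MOD n]) : k = k' := by
  have := Nat.ModEq.cancel_left_div_gcd hn h
  exact Nat.ModEq.eq_of_lt_of_lt this hk hk'

theorem aux_pow {n a : ℕ} : n ∣ a * (n / Nat.gcd n a) := by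
  obtain ⟨b, hb⟩ := Nat.gcd_dvd_right n a
  refine ⟨b, ?_⟩
  have h1 := Nat.div_mul_cancel (Nat.gcd_dvd_left n a)
  generalize Nat.gcd n a = g at *
  calc a * (n / g) = (n / g * g) * b := by rw [hb]; ring
    _ = n * b := by rw [h1]

/-- The character `(t₁,t₂) ↦ t₁^j t₂^(ak)`. -/
noncomputable def chr (F : Type) [Field F] (a : ℕ) (p : Σ _ : ℕ, ℕ) : Fˣ × Fˣ →* F where
  toFun t := (t.1 : F) ^ p.2 * ((t.2 : F) ^ a) ^ p.1
  map_one' := by simp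
  map_mul' := by intro s t; simp [mul_pow]; ring

theorem stmt7 (F : Type) [Field F] [Fintype F] (q : ℕ) (hq : Fintype.card F = q)
    (a : ℕ) (ha : 0 < a)
    (d2 : ℕ) (hd2 : d2 = (q - 1) / Nat.gcd (q - 1) a)
    (Y : Set (Fin 3 → F))
    (hY : Y = {y | ∃ t1 t2 : Fˣ, y = ![1, (t1 : F), (t2 : F) ^ a]})
    (α : ℕ) (hα : α ≤ q - 2)
    (μ2 : ℕ) (hμ2 : μ2 = min (α / a) (d2 - 1)) :
    (Module.finrank F (code F ![1, 1, a] α Y) : ℤ) =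
      (μ2 + 1) * (α + 1) - a * μ2 * (μ2 + 1) / 2 := by
  classical
  have hq2 : 2 ≤ q := by rw [← hq]; exact Fintype.one_lt_card
  have hn : 0 < q - 1 := by omega
  have hd : 0 < d2 := by
    rw [hd2]
    exact Nat.div_pos (Nat.le_of_dvd hn (Nat.gcd_dvd_left _ _)) (Nat.gcd_pos_of_pos_left _ hn)
  have hcard : Nat.card Fˣ = q - 1 := by
    rw [Nat.card_eq_fintype_card, Fintype.card_units, hq]
  have haμ : a * μ2 ≤ α := by
    calc a * μ2 ≤ a * (α / a) := Nat.mul_le_mul_left a (by rw [hμ2]; exact min_le_left _ _)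
      _ ≤ α := Nat.mul_div_le α a
  let I : Finset (Σ _ : ℕ, ℕ) :=
    (Finset.range (μ2 + 1)).sigma (fun k => Finset.range (α - a * k + 1))
  have hI : ∀ p : (Σ _ : ℕ, ℕ), p ∈ I ↔ p.1 ≤ μ2 ∧ p.2 ≤ α - a * p.1 := by
    intro p; simp [I]
  let v : I → (Y → F) := fun p y => y.1 1 ^ p.1.2 * y.1 2 ^ p.1.1
  have hmemY : ∀ t : Fˣ × Fˣ, ![1, (t.1 : F), (t.2 : F) ^ a] ∈ Y := by
    intro t; rw [hY]; exact ⟨t.1, t.2, rfl⟩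
  have hli : LinearIndependent F v := by
    let L : (Y → F) →ₗ[F] (Fˣ × Fˣ → F) :=
      LinearMap.funLeft F F (fun t : Fˣ × Fˣ => (⟨_, hmemY t⟩ : Y))
    apply LinearIndependent.of_comp L
    have h1 := linearIndependent_monoidHom (Fˣ × Fˣ) F
    have h2 : Function.Injective (fun p : I => chr F a p.1) := by
      rintro ⟨⟨k, j⟩, hp⟩ ⟨⟨k', j'⟩, hp'⟩ h
      rw [hI] at hp hp'
      simp only at hp hp'
      obtain ⟨g, hg⟩ := IsCyclic.exists_generator (α := Fˣ)
      have hord : orderOf g = q - 1 := by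
        rw [← hcard]; exact orderOf_eq_card_of_forall_mem_zpowers hg
      have e1 : g ^ j = g ^ j' := by
        have := DFunLike.congr_fun h (g, 1)
        simp [chr] at this
        exact_mod_cast this
      have e2 : g ^ (a * k) = g ^ (a * k') := by
        have := DFunLike.congr_fun h (1, g)
        simp [chr, ← pow_mul] at this
        exact_mod_cast this
      rw [pow_eq_pow_iff_modEq, hord] at e1 e2
      have hj : j = j' := Nat.ModEq.eq_of_lt_of_lt e1 (by omega) (by omega)
      have hk : k = k' := aux_dvd hn (by rw [← hd2]; omega) (by rw [← hd2]; omega) e2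
      subst hj hk
      rfl
    have h3 := h1.comp _ h2
    have h4 : (L ∘ v) = ((fun f : Fˣ × Fˣ →* F => (f : Fˣ × Fˣ → F)) ∘
        fun p : I => chr F a p.1) := by
      funext p t
      simp [L, v, chr, LinearMap.funLeft_apply]
    rw [h4]
    exact h3
  have hspan : code F ![1, 1, a] α Y = Submodule.span F (Set.range v) := by
    apply le_antisymm
    · rintro _ ⟨P, hP, rfl⟩
      rw [SetLike.mem_coe, mem_weightedHomogeneousSubmodule] at hP
      rw [P.as_sum, map_sum]
      refine Submodule.sum_mem _ fun m hm => ?_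
      have hw := hP (mem_support_iff.mp hm)
      simp [Finsupp.weight_apply, Finsupp.sum_fintype, Fin.sum_univ_three] at hw
      have hk1 : m 2 % d2 ≤ m 2 := Nat.mod_le _ _
      have hk2 : m 2 % d2 < d2 := Nat.mod_lt _ hd
      have hk3 : m 2 ≤ α / a := by rw [Nat.le_div_iff_mul_le ha]; omega
      have hk4 : a * (m 2 % d2) ≤ m 2 * a := by rw [mul_comm]; exact Nat.mul_le_mul_right a hk1
      have hmem : (⟨m 2 % d2, m 1⟩ : Σ _ : ℕ, ℕ) ∈ I := by
        rw [hI]; simp only; constructor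
        · rw [hμ2]; exact le_min (by omega) (by omega)
        · omega
      have : evalOn F Y (monomial m (coeff m P)) = coeff m P • v ⟨_, hmem⟩ := by
        funext y
        obtain ⟨y, hy⟩ := y
        have hy' := hy
        rw [hY] at hy'
        obtain ⟨t1, t2, rfl⟩ := hy'
        have h1 : ((t2 : F) ^ a) ^ d2 = 1 := by
          rw [← pow_mul]
          obtain ⟨c, hc⟩ : (q - 1) ∣ a * d2 := by rw [hd2]; exact aux_pow
          rw [hc, pow_mul, ← hq, FiniteField.pow_card_sub_one_eq_one _ t2.ne_zero, one_pow]
        have h2 : ((t2 : F) ^ a) ^ (m 2) = ((t2 : F) ^ a) ^ (m 2 % d2) := by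
          conv_lhs => rw [← Nat.div_add_mod (m 2) d2, pow_add, pow_mul, h1, one_pow, one_mul]
        simp [evalOn, v, eval_monomial, Finsupp.prod_fintype, Fin.prod_univ_three, h2]
      rw [this]
      exact Submodule.smul_mem _ _ (Submodule.subset_span ⟨_, rfl⟩)
    · rw [Submodule.span_le]
      rintro _ ⟨⟨⟨k, j⟩, hp⟩, rfl⟩
      have hp' := (hI _).1 hp
      simp only at hp'
      have hak : a * k ≤ α := le_trans (Nat.mul_le_mul_left a hp'.1) haμ
      refine ⟨monomial (Finsupp.equivFunOnFinite.symm ![α - a * k - j, j, k]) 1, ?_, ?_⟩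
      · rw [SetLike.mem_coe, mem_weightedHomogeneousSubmodule]
        apply isWeightedHomogeneous_monomial
        simp [Finsupp.weight_apply, Finsupp.sum_fintype, Fin.sum_univ_three]
        rw [mul_comm k a]; omega
      · funext y
        obtain ⟨y, hy⟩ := y
        have hy' := hy
        rw [hY] at hy'
        obtain ⟨t1, t2, rfl⟩ := hy'
        simp [evalOn, v, eval_monomial, Finsupp.prod_fintype, Fin.prod_univ_three]
  rw [hspan, finrank_span_eq_card hli, ← aux_card_s7 a α μ2 haμ, Fintype.card_coe, Finset.card_sigma]
  simp
end

section
/- Let q be a prime power, a a positive integer, and use weights (1, 1, a) on 𝔽_q[x_0, x_1, x_2]. Set d_2 = (q−1)/gcd(q−1, a) and Y = {(1, t_1, t_2^a) : t_1, t_2 ∈ 𝔽_q^×} ⊆ 𝔽_q^3. If q−2 < α < (q−2) + (d_2 − 1)a, then the dimension over 𝔽_q of the code C_{α,Y} equals (q−1)(k+1) + (μ_2 − k)(α + 1) − a·(μ_2(μ_2+1) − k(k+1))/2, where k = ⌊(α − (q−2))/a⌋ and μ_2 = min(⌊α/a⌋, d_2 − 1). -/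
open MvPolynomial

/-- The character `(t₁, t₂) ↦ t₁^i t₂^(a j)`. -/
noncomputable def chi (F : Type) [Field F] (a : ℕ) (p : ℕ × ℕ) : Fˣ × Fˣ →* F where
  toFun t := (t.1 : F) ^ p.1 * ((t.2 : F) ^ a) ^ p.2
  map_one' := by simp
  map_mul' := by intro x y; simp [mul_pow]; ring

theorem chi_mod (F : Type) [Field F] [Fintype F] (a : ℕ) (i j : ℕ) :
    chi F a (i % (Fintype.card F - 1),
      j % ((Fintype.card F - 1) / Nat.gcd (Fintype.card F - 1) a)) = chi F a (i, j) := by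
  classical
  have hc : Fintype.card Fˣ = Fintype.card F - 1 := Fintype.card_units F
  rw [← hc]
  set n := Fintype.card Fˣ with hn
  ext t
  simp only [chi, MonoidHom.coe_mk, OneHom.coe_mk]
  have h1 : ∀ t : Fˣ, (t : F) ^ n = 1 := fun t => by
    rw [← Units.val_pow_eq_pow_val, hn, pow_card_eq_one, Units.val_one]
  congr 1
  · conv_rhs => rw [← Nat.mod_add_div i n, pow_add, pow_mul, h1, one_pow, mul_one]
  · set d := n / Nat.gcd n a
    have hd : a * d = n * (a / Nat.gcd n a) := by
      rw [← Nat.mul_div_assoc _ (Nat.gcd_dvd_left n a),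
        ← Nat.mul_div_assoc _ (Nat.gcd_dvd_right n a), mul_comm]
    have h2 : ((t.2 : F) ^ a) ^ d = 1 := by
      rw [← pow_mul, hd, pow_mul, h1, one_pow]
    conv_rhs => rw [← Nat.mod_add_div j d, pow_add, pow_mul _ d, h2, one_pow, mul_one]

theorem chi_inj (F : Type) [Field F] [Fintype F] (a : ℕ) (i j i' j' : ℕ)
    (hi : i < Fintype.card F - 1) (hi' : i' < Fintype.card F - 1)
    (hj : j < (Fintype.card F - 1) / Nat.gcd (Fintype.card F - 1) a)
    (hj' : j' < (Fintype.card F - 1) / Nat.gcd (Fintype.card F - 1) a)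
    (h : chi F a (i, j) = chi F a (i', j')) : i = i' ∧ j = j' := by
  classical
  have hc : Fintype.card Fˣ = Fintype.card F - 1 := Fintype.card_units F
  rw [← hc] at hi hi' hj hj'
  obtain ⟨g, hg⟩ := IsCyclic.exists_generator (α := Fˣ)
  have ho : orderOf g = Fintype.card Fˣ := orderOf_eq_card_of_forall_mem_zpowers hg |>.trans
    (Nat.card_eq_fintype_card)
  have e1 := DFunLike.congr_fun h (g, 1)
  have e2 := DFunLike.congr_fun h (1, g)
  simp only [chi, MonoidHom.coe_mk, OneHom.coe_mk, Units.val_one, one_pow, mul_one, one_mul,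
    ← Units.val_pow_eq_pow_val, ← pow_mul] at e1 e2
  have e1 := pow_eq_pow_iff_modEq.1 (Units.ext e1)
  have e2 := pow_eq_pow_iff_modEq.1 (Units.ext e2)
  rw [ho] at e1 e2
  refine ⟨Nat.ModEq.eq_of_lt_of_lt e1 hi hi', ?_⟩
  have := Nat.ModEq.cancel_left_div_gcd (Fintype.card_pos) e2
  exact Nat.ModEq.eq_of_lt_of_lt this hj hj'

/-- Index set of the distinct characters. -/
def idx (m d a α : ℕ) : Finset (ℕ × ℕ) :=
  ((Finset.range m) ×ˢ (Finset.range d)).filter (fun p => p.1 + a * p.2 ≤ α)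

theorem code_map (F : Type) [Field F] [Fintype F] (a : ℕ) (Y : Set (Fin 3 → F)) (α : ℕ)
    (φ : Fˣ × Fˣ → Y) (hφ : ∀ t, (φ t).1 = ![1, (t.1 : F), (t.2 : F) ^ a]) :
    (code F ![1, 1, a] α Y).map (LinearMap.funLeft F F φ) =
      Submodule.span F (Set.range (fun p : idx (Fintype.card F - 1)
        ((Fintype.card F - 1) / Nat.gcd (Fintype.card F - 1) a) a α => (chi F a p.1 : Fˣ × Fˣ → F))) := by
  have hev : ∀ m : Fin 3 →₀ ℕ, LinearMap.funLeft F F φ (evalOn F Y (monomial m 1)) =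
      (chi F a (m 1, m 2) : Fˣ × Fˣ → F) := by
    intro m
    funext t
    simp [LinearMap.funLeft, evalOn, chi, eval_monomial, hφ, Finsupp.prod_fintype,
      Fin.prod_univ_three]
  have hw : ∀ m : Fin 3 →₀ ℕ, Finsupp.weight ![1, 1, a] m = m 0 + m 1 + a * m 2 := by
    intro m
    simp [Finsupp.weight_apply, Finsupp.sum_fintype, Fin.sum_univ_three, mul_comm]
  have hspan : weightedHomogeneousSubmodule F ![1, 1, a] α =
      Submodule.span F ((fun m => monomial m (1 : F)) ''
        {m : Fin 3 →₀ ℕ | Finsupp.weight ![1, 1, a] m = α}) := by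
    apply le_antisymm
    · intro P hP
      rw [P.as_sum]
      refine Submodule.sum_mem _ fun m hm => ?_
      have : monomial m (coeff m P) = coeff m P • monomial m (1 : F) := by
        simp [smul_monomial]
      rw [this]
      exact Submodule.smul_mem _ _ (Submodule.subset_span ⟨m, hP (mem_support_iff.1 hm), rfl⟩)
    · rw [Submodule.span_le]
      rintro _ ⟨m, hm, rfl⟩
      exact isWeightedHomogeneous_monomial _ _ _ hm
  rw [code, hspan, Submodule.map_span, Submodule.map_span]
  congr 1
  have hF : 0 < Fintype.card F - 1 := by
    have := Fintype.one_lt_card (α := F); omega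
  have hd : 0 < (Fintype.card F - 1) / Nat.gcd (Fintype.card F - 1) a :=
    Nat.div_pos (Nat.gcd_le_left _ hF) (Nat.gcd_pos_of_pos_left _ hF)
  ext f
  constructor
  · rintro ⟨_, ⟨_, ⟨m, hm, rfl⟩, rfl⟩, rfl⟩
    have hm : Finsupp.weight ![1, 1, a] m = α := hm
    rw [hw] at hm
    refine ⟨⟨(m 1 % (Fintype.card F - 1),
      m 2 % ((Fintype.card F - 1) / Nat.gcd (Fintype.card F - 1) a)), ?_⟩, ?_⟩
    · simp only [idx, Finset.mem_filter, Finset.mem_product, Finset.mem_range]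
      refine ⟨⟨Nat.mod_lt _ hF, Nat.mod_lt _ hd⟩, ?_⟩
      have h1 := Nat.mod_le (m 1) (Fintype.card F - 1)
      have h2 := Nat.mul_le_mul_left a
        (Nat.mod_le (m 2) ((Fintype.card F - 1) / Nat.gcd (Fintype.card F - 1) a))
      omega
    · simp only
      rw [hev, chi_mod]
  · rintro ⟨⟨⟨i, j⟩, hp⟩, rfl⟩
    simp only [idx, Finset.mem_filter, Finset.mem_product, Finset.mem_range] at hp
    refine ⟨_, ⟨_, ⟨Finsupp.equivFunOnFinite.symm ![α - (i + a * j), i, j], ?_, rfl⟩, rfl⟩, ?_⟩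
    · simp only [Set.mem_ofPred_eq]
      rw [hw]
      simp
      omega
    · rw [hev]; simp

theorem code_finrank (F : Type) [Field F] [Fintype F] (a : ℕ) (Y : Set (Fin 3 → F)) (α : ℕ)
    (hY : Y = {y | ∃ t1 t2 : Fˣ, y = ![1, (t1 : F), (t2 : F) ^ a]}) :
    Module.finrank F (code F ![1, 1, a] α Y) = (idx (Fintype.card F - 1)
        ((Fintype.card F - 1) / Nat.gcd (Fintype.card F - 1) a) a α).card := by
  classical
  let φ : Fˣ × Fˣ → Y := fun t => ⟨![1, (t.1 : F), (t.2 : F) ^ a], by rw [hY]; exact ⟨_, _, rfl⟩⟩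
  have hs : Function.Surjective φ := by
    rintro ⟨y, hy⟩
    have hy' := hy
    rw [hY] at hy'
    obtain ⟨t1, t2, h⟩ := hy'
    exact ⟨(t1, t2), Subtype.ext h.symm⟩
  have hinj := LinearMap.funLeft_injective_of_surjective F F φ hs
  rw [(Submodule.equivMapOfInjective _ hinj (code F ![1, 1, a] α Y)).finrank_eq, code_map F a Y α φ (fun _ => rfl),
    finrank_span_eq_card, Fintype.card_coe]
  refine (linearIndependent_monoidHom (Fˣ × Fˣ) F).comp
    (fun p : idx (Fintype.card F - 1)
        ((Fintype.card F - 1) / Nat.gcd (Fintype.card F - 1) a) a α => chi F a p.1) ?_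
  rintro ⟨⟨i, j⟩, hp⟩ ⟨⟨i', j'⟩, hp'⟩ h
  simp only [idx, Finset.mem_filter, Finset.mem_product, Finset.mem_range] at hp hp'
  obtain ⟨rfl, rfl⟩ := chi_inj F a i j i' j' hp.1.1 hp'.1.1 hp.1.2 hp'.1.2 h
  rfl

theorem idx_card (m d a α : ℕ) :
    (idx m d a α).card = ∑ j ∈ Finset.range d, min m (α + 1 - a * j) := by
  rw [idx, Finset.card_filter, Finset.sum_product_right]
  refine Finset.sum_congr rfl fun j _ => ?_
  rw [← Finset.card_filter, ← Finset.card_range (min m (α + 1 - a * j))]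
  congr 1
  ext i
  simp only [Finset.mem_filter, Finset.mem_range]
  omega

theorem arith_tail (a α : ℕ) (k n : ℕ) (hn : ∀ j, j ≤ k + n → a * j ≤ α) :
    2 * ((∑ j ∈ Finset.Ico (k + 1) (k + n + 1), (α + 1 - a * j) : ℕ) : ℤ) =
      2 * ((n : ℤ) * (α + 1)) - a * (((k + n : ℕ) : ℤ) * ((k + n : ℕ) + 1) - k * (k + 1)) := by
  induction n with
  | zero => simp
  | succ n ih =>
    have ih := ih (fun j hj => hn j (by omega))
    rw [← add_assoc k n 1, Finset.sum_Ico_succ_top (by omega), Nat.cast_add, mul_add, ih,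
      Nat.cast_sub (by have := hn (k + n + 1) (by omega); omega)]
    push_cast
    ring

/-- With `q` the cardinality of a finite field `𝔽`, a positive
integer `a`, weights `(1, 1, a)` on `𝔽[x₀, x₁, x₂]`, `d₂ = (q-1)/gcd(q-1, a)` and
`Y = {(1, t₁, t₂^a) : t₁, t₂ ∈ 𝔽ˣ}`: if `q-2 < α < (q-2) + (d₂-1)a` then
`dim C_{α,Y} = (q-1)(k+1) + (μ₂-k)(α+1) - a(μ₂(μ₂+1) - k(k+1))/2` where
`k = ⌊(α-(q-2))/a⌋` and `μ₂ = min(⌊α/a⌋, d₂-1)`. -/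
theorem stmt8 (F : Type) [Field F] [Fintype F] (q : ℕ) (hq : Fintype.card F = q)
    (a : ℕ) (ha : 0 < a)
    (d2 : ℕ) (hd2 : d2 = (q - 1) / Nat.gcd (q - 1) a)
    (Y : Set (Fin 3 → F))
    (hY : Y = {y | ∃ t1 t2 : Fˣ, y = ![1, (t1 : F), (t2 : F) ^ a]})
    (α : ℕ) (hα1 : q - 2 < α) (hα2 : α < (q - 2) + (d2 - 1) * a)
    (k : ℕ) (hk : k = (α - (q - 2)) / a)
    (μ2 : ℕ) (hμ2 : μ2 = min (α / a) (d2 - 1)) :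
    (Module.finrank F (code F ![1, 1, a] α Y) : ℤ) =
      ((q : ℤ) - 1) * (k + 1) + ((μ2 : ℤ) - k) * (α + 1) -
        a * ((μ2 : ℤ) * (μ2 + 1) - k * (k + 1)) / 2 := by
  subst hq
  rw [code_finrank F a Y α hY, ← hd2, idx_card]
  have hF := Fintype.one_lt_card (α := F)
  set q := Fintype.card F
  have hd : 1 ≤ d2 := by
    rcases Nat.eq_zero_or_pos d2 with h | h
    · rw [h] at hα2; simp at hα2; omega
    · exact h
  have hkα : k ≤ α / a := by rw [hk]; exact Nat.div_le_div_right (by omega)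
  have hkd : k ≤ d2 - 1 := by
    rw [hk]; exact (Nat.div_lt_of_lt_mul (by rw [mul_comm]; omega)).le
  have hkμ : k ≤ μ2 := by rw [hμ2]; exact le_min hkα hkd
  have hμd : μ2 + 1 ≤ d2 := by
    have : μ2 ≤ d2 - 1 := by rw [hμ2]; exact min_le_right _ _
    omega
  have hμα : ∀ j, j ≤ μ2 → a * j ≤ α := by
    intro j hj
    have : j ≤ α / a := hj.trans (by rw [hμ2]; exact min_le_left _ _)
    rw [mul_comm]; exact (Nat.le_div_iff_mul_le ha).1 this
  have hle : ∀ j, j ≤ k ↔ a * j ≤ α - (q - 2) := by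
    intro j; rw [hk, Nat.le_div_iff_mul_le ha, mul_comm]
  have s0 : ∑ j ∈ Finset.range d2, min (q - 1) (α + 1 - a * j) =
      (k + 1) * (q - 1) + ∑ j ∈ Finset.Ico (k + 1) (μ2 + 1), (α + 1 - a * j) := by
    rw [← Finset.sum_range_add_sum_Ico _ hμd,
      ← Finset.sum_range_add_sum_Ico _ (show k + 1 ≤ μ2 + 1 by omega)]
    have z : ∑ j ∈ Finset.Ico (μ2 + 1) d2, min (q - 1) (α + 1 - a * j) = 0 := by
      refine Finset.sum_eq_zero fun j hj => ?_
      rw [Finset.mem_Ico] at hj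
      have : α / a < j := by
        by_contra hh
        have : j ≤ μ2 := by rw [hμ2]; exact le_min (by omega) (by omega)
        omega
      have := (Nat.div_lt_iff_lt_mul ha).1 this
      rw [mul_comm] at this
      omega
    rw [z, add_zero]
    congr 1
    · rw [Finset.sum_congr rfl (g := fun _ => q - 1)]
      · simp
      · intro j hj
        have := (hle j).1 (by have := Finset.mem_range.1 hj; omega)
        omega
    · refine Finset.sum_congr rfl fun j hj => ?_
      rw [Finset.mem_Ico] at hj
      have : ¬ a * j ≤ α - (q - 2) := fun h => by have := (hle j).2 h; omega
      omega
  obtain ⟨n, rfl⟩ := Nat.exists_eq_add_of_le hkμ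
  have ht := arith_tail a α k n hμα
  rw [s0, Nat.cast_add, Nat.cast_mul, Nat.cast_sub (by omega)]
  set S := ((∑ j ∈ Finset.Ico (k + 1) (k + n + 1), (α + 1 - a * j) : ℕ) : ℤ)
  have hdiv : (a : ℤ) * (((k + n : ℕ) : ℤ) * ((k + n : ℕ) + 1) - k * (k + 1)) / 2 =
      n * (α + 1) - S := by
    apply Int.ediv_eq_of_eq_mul_right (by norm_num)
    linarith
  rw [hdiv]
  push_cast
  ring
end

section
/- Let q be a prime power, a a positive integer, and use weights (1, 1, a) on 𝔽_q[x_0, x_1, x_2]. Set d_2 = (q−1)/gcd(q−1, a) and Y = {(1, t_1, t_2^a) : t_1, t_2 ∈ 𝔽_q^×} ⊆ 𝔽_q^3. If 0 ≤ α ≤ q−2, then the minimum distance of the code C_{α,Y} equals d_2·(q − 1 − α); that is, every nonzero codeword c ∈ C_{α,Y} satisfies #{P ∈ Y : c(P) ≠ 0} ≥ d_2(q−1−α), and some nonzero codeword attains this value. -/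
open MvPolynomial

open Finset in
lemma S1_card (F : Type) [Field F] [Fintype F] [DecidableEq F] (a : ℕ) :
    #(univ.image (fun t : Fˣ => (t : F) ^ a)) =
      (Fintype.card F - 1) / Nat.gcd (Fintype.card F - 1) a := by
  classical
  have h := IsCyclic.card_powMonoidHom_range (G := Fˣ) a
  rw [Nat.card_eq_fintype_card (α := Fˣ), Fintype.card_units] at h
  rw [← h]
  have h2 : univ.image (fun t : Fˣ => (t : F) ^ a) =
      (univ.image (fun t : Fˣ => t ^ a)).image (fun t : Fˣ => (t : F)) := by
    rw [Finset.image_image]; congr 1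
  rw [h2, Finset.card_image_of_injective _ Units.val_injective, ← Set.ncard_coe_finset,
    ← Nat.card_coe_set_eq]
  simp only [Finset.coe_image, Finset.coe_univ, Set.image_univ]
  rfl

open Finset in
lemma S0_card (F : Type) [Field F] [Fintype F] [DecidableEq F] :
    #(univ.image (fun t : Fˣ => (t : F))) = Fintype.card F - 1 := by
  rw [Finset.card_image_of_injective _ Units.val_injective, Finset.card_univ, Fintype.card_units]

open Finset in
lemma count_eq (F : Type) [Field F] [Fintype F] [DecidableEq F] (a : ℕ)
    (Y : Set (Fin 3 → F))
    (hY : Y = {y | ∃ t1 t2 : Fˣ, y = ![1, (t1 : F), (t2 : F) ^ a]})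
    (P : MvPolynomial (Fin 3) F) :
    {p : Y | evalOn F Y P p ≠ 0}.ncard =
      #{x ∈ Fintype.piFinset ![univ.image (fun t : Fˣ => (t : F)),
          univ.image (fun t : Fˣ => (t : F) ^ a)] | eval ![1, x 0, x 1] P ≠ 0} := by
  rw [← Set.ncard_coe_finset]
  refine Set.ncard_congr (fun p _ => ![p.1 1, p.1 2]) ?_ ?_ ?_
  · rintro ⟨p, hp⟩ h
    have hp2 := hp
    rw [hY] at hp2
    obtain ⟨t1, t2, rfl⟩ := hp2
    simpa [Fintype.mem_piFinset, Fin.forall_fin_two, evalOn] using h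
  · rintro ⟨p, hp⟩ ⟨p', hp'⟩ _ _ h
    rw [hY] at hp hp'
    obtain ⟨t1, t2, rfl⟩ := hp
    obtain ⟨u1, u2, rfl⟩ := hp'
    have h0 := congrFun h 0
    have h1 := congrFun h 1
    simp at h0 h1
    simp [h0, h1]
  · intro x hx
    simp only [coe_filter, Fintype.mem_piFinset, Fin.forall_fin_two, Set.mem_ofPred_eq] at hx
    obtain ⟨⟨h0, h1⟩, h2⟩ := hx
    simp at h0 h1
    obtain ⟨t1, h0⟩ := h0
    obtain ⟨t2, h1⟩ := h1
    refine ⟨⟨![1, x 0, x 1], ?_⟩, ?_, ?_⟩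
    · rw [hY]; exact ⟨t1, t2, by rw [h0, h1]⟩
    · simpa [evalOn] using h2
    · ext i; fin_cases i <;> simp

lemma dehom (F : Type) [Field F] (a α : ℕ) (P : MvPolynomial (Fin 3) F)
    (hP : P.IsWeightedHomogeneous ![1, 1, a] α) :
    ∃ g : MvPolynomial (Fin 2) F, (∀ x : Fin 2 → F, eval x g = eval ![1, x 0, x 1] P) ∧
      ∀ m ∈ g.support, m 0 + a * m 1 ≤ α := by
  classical
  refine ⟨∑ m ∈ P.support, monomial (Finsupp.equivFunOnFinite.symm ![m 1, m 2]) (P.coeff m), ?_, ?_⟩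
  · intro x
    rw [map_sum, eval_eq']
    refine Finset.sum_congr rfl fun m _ => ?_
    rw [eval_monomial, Finsupp.prod_fintype _ _ (by simp)]
    simp [Fin.prod_univ_succ]
  · intro n hn
    obtain ⟨m, hm, hn⟩ := Finset.mem_biUnion.1 (support_sum hn)
    have hn := Finset.mem_singleton.1 (support_monomial_subset hn)
    have := hP (mem_support_iff.1 hm)
    rw [Finsupp.weight_apply, Finsupp.sum_fintype _ _ (by simp)] at this
    simp [Fin.sum_univ_succ] at this
    subst hn
    simp
    rw [mul_comm]
    omega

open Finset in
lemma lower (F : Type) [Field F] [DecidableEq F] (a α N d : ℕ) (S : Fin 2 → Finset F)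
    (h0 : #(S 0) = N) (h1 : #(S 1) = d) (hN : 0 < N) (hd : 0 < d) (had : N ≤ a * d)
    (g : MvPolynomial (Fin 2) F) (hg : g ≠ 0) (hs : ∀ m ∈ g.support, m 0 + a * m 1 ≤ α) :
    d * (N - α) ≤ #{x ∈ Fintype.piFinset S | eval x g ≠ 0} := by
  have h := schwartz_zippel_sup_sum hg S
  have h2 : (g.support.sup fun s ↦ ∑ i, (s i / #(S i) : ℚ≥0)) ≤ (α : ℚ≥0) / N := by
    refine Finset.sup_le fun m hm => ?_
    have := hs m hm
    rw [Fin.sum_univ_two, h0, h1, div_add_div _ _ (by positivity) (by positivity),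
      div_le_div_iff₀ (by positivity) (by positivity)]
    norm_cast
    calc (m 0 * d + N * m 1) * N ≤ (m 0 * d + (a * d) * m 1) * N := by gcongr
      _ = (m 0 + a * m 1) * (N * d) := by ring
      _ ≤ _ := by gcongr
  have h3 := h.trans h2
  rw [Fin.prod_univ_two, h0, h1, div_le_div_iff₀ (by positivity) (by positivity)] at h3
  norm_cast at h3
  have h4 := Finset.card_filter_add_card_filter_not (s := Fintype.piFinset S) (fun x => eval x g = 0)
  rw [Fintype.card_piFinset, Fin.prod_univ_two, h0, h1] at h4
  have h5 : #{x ∈ Fintype.piFinset S | eval x g = 0} ≤ α * d := by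
    have : N * #{x ∈ Fintype.piFinset S | eval x g = 0} ≤ N * (α * d) := by
      nlinarith
    exact Nat.le_of_mul_le_mul_left this hN
  rw [Nat.mul_sub, mul_comm d N, mul_comm d α]
  have h6 : #{x ∈ Fintype.piFinset S | ¬ eval x g = 0} = #{x ∈ Fintype.piFinset S | eval x g ≠ 0} := rfl
  omega

/-- With `q` the cardinality of a finite field `𝔽`, a positive
integer `a`, weights `(1, 1, a)` on `𝔽[x₀, x₁, x₂]`, `d₂ = (q-1)/gcd(q-1, a)` and
`Y = {(1, t₁, t₂^a) : t₁, t₂ ∈ 𝔽ˣ}`: if `0 ≤ α ≤ q-2` then the minimum distance of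
`C_{α,Y}` equals `d₂(q-1-α)`: every nonzero codeword has at least `d₂(q-1-α)`
nonzero coordinates, and some nonzero codeword attains this value. -/
theorem stmt9 (F : Type) [Field F] [Fintype F] (q : ℕ) (hq : Fintype.card F = q)
    (a : ℕ) (ha : 0 < a)
    (d2 : ℕ) (hd2 : d2 = (q - 1) / Nat.gcd (q - 1) a)
    (Y : Set (Fin 3 → F))
    (hY : Y = {y | ∃ t1 t2 : Fˣ, y = ![1, (t1 : F), (t2 : F) ^ a]})
    (α : ℕ) (hα : α ≤ q - 2) :
    (∀ c ∈ code F ![1, 1, a] α Y, c ≠ 0 →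
        d2 * (q - 1 - α) ≤ {p : Y | c p ≠ 0}.ncard) ∧
      ∃ c ∈ code F ![1, 1, a] α Y, c ≠ 0 ∧
        {p : Y | c p ≠ 0}.ncard = d2 * (q - 1 - α) := by
  classical
  have hS0 := S0_card F
  have hS1 := S1_card F a
  rw [hq] at hS0 hS1
  rw [← hd2] at hS1
  have hq2 : 2 ≤ q := hq ▸ Fintype.one_lt_card
  have hgd : Nat.gcd (q - 1) a ∣ q - 1 := Nat.gcd_dvd_left _ _
  have hgp : 0 < Nat.gcd (q - 1) a := Nat.gcd_pos_of_pos_right _ ha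
  have hmul : Nat.gcd (q - 1) a * d2 = q - 1 := by rw [hd2, Nat.mul_div_cancel' hgd]
  have hd : 0 < d2 := Nat.pos_of_ne_zero (by rintro rfl; omega)
  have had : q - 1 ≤ a * d2 := by
    rw [← hmul]; exact Nat.mul_le_mul_right _ (Nat.gcd_le_right _ ha)
  constructor
  · rintro c ⟨P, hP, rfl⟩ hc
    rw [count_eq F a Y hY]
    obtain ⟨g, hg, hgs⟩ := dehom F a α P hP
    simp_rw [← hg]
    refine lower F a α (q - 1) d2 _ hS0 hS1 (by omega) hd had g ?_ hgs
    rintro rfl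
    apply hc
    funext ⟨p, hp⟩
    have hp2 := hp
    rw [hY] at hp2
    obtain ⟨t1, t2, rfl⟩ := hp2
    have := hg ![(t1 : F), (t2 : F) ^ a]
    simpa [evalOn] using this.symm
  · obtain ⟨T, hT, hTc⟩ := Finset.exists_subset_card_eq
      (s := Finset.univ.image (fun t : Fˣ => (t : F))) (n := α) (by omega)
    have key : {p : Y | evalOn F Y (∏ s ∈ T, (X 1 - C s * X 0)) p ≠ 0}.ncard
        = d2 * (q - 1 - α) := by
      rw [count_eq F a Y hY]
      have : {x ∈ Fintype.piFinset ![Finset.univ.image (fun t : Fˣ => (t : F)),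
          Finset.univ.image (fun t : Fˣ => (t : F) ^ a)] |
            eval ![1, x 0, x 1] (∏ s ∈ T, (X 1 - C s * X 0)) ≠ 0}
          = Fintype.piFinset ![Finset.univ.image (fun t : Fˣ => (t : F)) \ T,
          Finset.univ.image (fun t : Fˣ => (t : F) ^ a)] := by
        ext x
        simp only [Finset.mem_filter, Fintype.mem_piFinset, Fin.forall_fin_two, map_prod,
          Finset.prod_ne_zero_iff, map_sub, map_mul, eval_X, eval_C, Matrix.cons_val_zero,
          Matrix.cons_val_one, mul_one, sub_ne_zero, Finset.mem_sdiff]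
        constructor
        · rintro ⟨⟨h0, h1⟩, h2⟩
          exact ⟨⟨h0, fun h => h2 _ h rfl⟩, h1⟩
        · rintro ⟨⟨h0, h2⟩, h1⟩
          exact ⟨⟨h0, h1⟩, fun s hs h => h2 (h ▸ hs)⟩
      rw [this, Fintype.card_piFinset, Fin.prod_univ_two]
      simp only [Matrix.cons_val_zero, Matrix.cons_val_one]
      rw [Finset.card_sdiff_of_subset hT, hS0, hS1, hTc, mul_comm]
    refine ⟨_, ⟨∏ s ∈ T, (X 1 - C s * X 0), ?_, rfl⟩, ?_, key⟩
    · have := IsWeightedHomogeneous.prod (w := ![1, 1, a]) T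
        (fun s => (X 1 - C s * X 0 : MvPolynomial (Fin 3) F)) (fun _ => 1) (by
          intro s _
          refine (weightedHomogeneousSubmodule F ![1, 1, a] 1).sub_mem ?_ ?_
          · exact isWeightedHomogeneous_X F ![1, 1, a] 1
          · have := (isWeightedHomogeneous_C ![1, 1, a] s).mul
              (isWeightedHomogeneous_X F ![1, 1, a] 0)
            simpa using this)
      simpa [hTc] using this
    · intro h0
      rw [h0] at key
      simp at key
      rcases key with h | h <;> omega
end

section
/- Let q be a prime power, a a positive integer, and use weights (1, 1, a) on 𝔽_q[x_0, x_1, x_2]. Set d_2 = (q−1)/gcd(q−1, a) and Y = {(1, t_1, t_2^a) : t_1, t_2 ∈ 𝔽_q^×} ⊆ 𝔽_q^3. If q−2 ≤ α < (q−2) + (d_2 − 1)a, then the minimum distance of the code C_{α,Y} equals d_2 − k, where k = ⌊(α − (q−2))/a⌋. -/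
open MvPolynomial

open Classical in
theorem aux_nonzeros {F : Type} [Field F] (H : Finset F) (p : Polynomial F) (hp : p ≠ 0) :
    H.card - p.natDegree ≤ (H.filter (fun s => p.eval s ≠ 0)).card := by
  have h1 := Finset.card_filter_add_card_filter_not (s := H) (fun s => p.eval s = 0)
  have h2 : (H.filter (fun s => p.eval s = 0)).card ≤ p.natDegree := by
    apply Polynomial.card_le_degree_of_subset_roots
    intro x hx
    have hx' : x ∈ H.filter (fun s => p.eval s = 0) := hx
    rw [Polynomial.mem_roots hp]
    exact (Finset.mem_filter.1 hx').2
  have h3 : (H.filter (fun s => ¬ p.eval s = 0)).card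
    = (H.filter (fun s => p.eval s ≠ 0)).card := rfl
  omega

theorem aux_arith (q a d2 α k i j : ℕ) (ha : 0 < a) (hq : 2 ≤ q)
    (hα1 : q - 2 ≤ α) (hk : k = (α - (q - 2)) / a) (hj : j < d2)
    (h1 : i ≤ q - 2) (h2 : i + a * j ≤ α) : d2 - k ≤ (q - 1 - i) * (d2 - j) := by
  have hlt : α - (q - 2) < (k + 1) * a := by
    rw [← Nat.div_lt_iff_lt_mul ha]; omega
  obtain ⟨n, rfl⟩ := Nat.exists_eq_add_of_lt hj
  by_cases hjk : j ≤ k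
  · have : 1 ≤ q - 1 - i := by omega
    calc j + n + 1 - k ≤ 1 * (j + n + 1 - j) := by omega
      _ ≤ _ := Nat.mul_le_mul_right _ this
  · obtain ⟨m, rfl⟩ := Nat.exists_eq_add_of_lt (not_le.1 hjk)
    have hm : m ≤ a * m := Nat.le_mul_of_pos_left m ha
    have e : a * (k + m + 1) = (k + 1) * a + a * m := by ring
    have : m + 2 ≤ q - 1 - i := by omega
    have e2 : k + m + 1 + n + 1 - (k + m + 1) = n + 1 := by omega
    rw [e2]
    calc k + m + 1 + n + 1 - k = m + n + 2 := by omega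
      _ ≤ (m + 2) * (n + 1) := by nlinarith
      _ ≤ _ := Nat.mul_le_mul_right _ this

open Classical in
theorem aux_lower {F : Type} [Field F] (U H : Finset F) (q a d2 α k : ℕ) (ha : 0 < a)
    (hq : 2 ≤ q) (hα1 : q - 2 ≤ α) (hk : k = (α - (q - 2)) / a)
    (hU : U.card = q - 1) (hH : H.card = d2) (g : ℕ → Polynomial F)
    (hg : ∀ j i, (g j).coeff i ≠ 0 → i ≤ q - 2 ∧ i + a * j ≤ α)
    (hne : ∃ j ∈ Finset.range d2, g j ≠ 0) :
    d2 - k ≤ ((U ×ˢ H).filter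
      (fun p => ∑ j ∈ Finset.range d2, (g j).eval p.1 * p.2 ^ j ≠ 0)).card := by
  have hne' : ((Finset.range d2).filter (fun j => g j ≠ 0)).Nonempty := by
    obtain ⟨j, hj, h⟩ := hne
    exact ⟨j, Finset.mem_filter.2 ⟨hj, h⟩⟩
  obtain ⟨J, hJ, hmax⟩ := Finset.exists_max_image _ (fun j => j) hne'
  rw [Finset.mem_filter, Finset.mem_range] at hJ
  obtain ⟨hJd, hJ0⟩ := hJ
  have hmax' : ∀ j, j < d2 → J < j → g j = 0 := by
    intro j hj hlt
    by_contra h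
    have := hmax j (Finset.mem_filter.2 ⟨Finset.mem_range.2 hj, h⟩)
    omega
  obtain ⟨h1, h2⟩ := hg J (g J).natDegree (by simpa using hJ0)
  refine (aux_arith q a d2 α k _ J ha hq hα1 hk hJd h1 h2).trans ?_
  set T := U.filter (fun t => (g J).eval t ≠ 0) with hT
  have hTc : q - 1 - (g J).natDegree ≤ T.card := hU ▸ aux_nonzeros U (g J) hJ0
  set S : F → Finset F := fun t =>
    H.filter (fun s => ∑ j ∈ Finset.range d2, (g j).eval t * s ^ j ≠ 0) with hS
  have hSc : ∀ t ∈ T, d2 - J ≤ (S t).card := by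
    intro t ht
    have ht0 := (Finset.mem_filter.1 ht).2
    let p : Polynomial F := ∑ j ∈ Finset.range d2, Polynomial.monomial j ((g j).eval t)
    have hpc : ∀ j, p.coeff j = if j < d2 then (g j).eval t else 0 := by
      intro j
      simp [p, Polynomial.finsetSum_coeff, Polynomial.coeff_monomial]
    have hp0 : p ≠ 0 := by
      intro h
      have := hpc J
      rw [h, if_pos hJd] at this
      exact ht0 (by simpa using this.symm)
    have hpd : p.natDegree ≤ J := by
      rw [Polynomial.natDegree_le_iff_coeff_eq_zero]
      intro j hj
      rw [hpc]
      split_ifs with h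
      · rw [hmax' j h hj]; simp
      · rfl
    have := aux_nonzeros H p hp0
    have e : H.filter (fun s => p.eval s ≠ 0) = S t := by
      simp [hS, p, Polynomial.eval_finsetSum, Polynomial.eval_monomial]
    rw [e] at this
    omega
  calc (q - 1 - (g J).natDegree) * (d2 - J) ≤ T.card * (d2 - J) := Nat.mul_le_mul_right _ hTc
    _ = ∑ t ∈ T, (d2 - J) := by simp
    _ ≤ ∑ t ∈ T, (S t).card := Finset.sum_le_sum hSc
    _ = (T.sigma S).card := (Finset.card_sigma _ _).symm
    _ ≤ _ := by
      apply Finset.card_le_card_of_injOn (fun x => (x.1, x.2))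
      · rintro ⟨t, s⟩ h
        simp only [hT, hS, Finset.coe_sigma, Set.mem_sigma_iff, Finset.mem_coe,
          Finset.mem_filter, Finset.mem_product] at h ⊢
        exact ⟨⟨h.1.1, h.2.1⟩, h.2.2⟩
      · rintro ⟨t, s⟩ _ ⟨t', s'⟩ _ h
        simp only [Prod.mk.injEq] at h
        obtain ⟨rfl, rfl⟩ := h
        rfl

open Classical in
theorem aux_count {F : Type} [Field F] (U H : Finset F) (Y : Set (Fin 3 → F))
    (hY : ∀ y, y ∈ Y ↔ ∃ t ∈ U, ∃ s ∈ H, y = ![1, t, s]) (c : Y → F) (G : F → F → F)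
    (hc : ∀ p : Y, c p = G (p.1 1) (p.1 2)) :
    {p : Y | c p ≠ 0}.ncard = ((U ×ˢ H).filter (fun p => G p.1 p.2 ≠ 0)).card := by
  rw [← Set.ncard_coe_finset]
  refine Set.ncard_congr (fun p _ => (p.1 1, p.1 2)) ?_ ?_ ?_
  · rintro ⟨y, hy⟩ h
    have h' : c ⟨y, hy⟩ ≠ 0 := h
    rw [hc] at h'
    obtain ⟨t, ht, s, hs, rfl⟩ := (hY y).1 hy
    simp only [Finset.mem_coe, Finset.mem_filter, Finset.mem_product]
    exact ⟨⟨ht, hs⟩, h'⟩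
  · rintro ⟨y, hy⟩ ⟨y', hy'⟩ _ _ h
    obtain ⟨t, ht, s, hs, rfl⟩ := (hY y).1 hy
    obtain ⟨t', ht', s', hs', rfl⟩ := (hY y').1 hy'
    simp at h
    obtain ⟨rfl, rfl⟩ := h
    rfl
  · rintro ⟨t, s⟩ h
    simp only [Finset.mem_coe, Finset.mem_filter, Finset.mem_product] at h
    have hy : ![1, t, s] ∈ Y := (hY _).2 ⟨t, h.1.1, s, h.1.2, rfl⟩
    refine ⟨⟨_, hy⟩, ?_, ?_⟩
    · simp only [Set.mem_ofPred_eq, hc]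
      exact h.2
    · simp

theorem aux_weight (a : ℕ) (d : Fin 3 →₀ ℕ) :
    Finsupp.weight ![1, 1, a] d = d 0 + d 1 + d 2 * a := by
  simp [Finsupp.weight_apply, Finsupp.sum_fintype, Fin.sum_univ_three]

open Classical in
theorem aux_reduce {F : Type} [Field F] (q a d2 α : ℕ) (hq : 2 ≤ q) (hd : 0 < d2)
    (P : MvPolynomial (Fin 3) F) (hP : P.IsWeightedHomogeneous ![1, 1, a] α) :
    ∃ g : ℕ → Polynomial F,
      (∀ j i, (g j).coeff i ≠ 0 → i ≤ q - 2 ∧ i + a * j ≤ α) ∧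
      ∀ t s : F, t ^ (q - 1) = 1 → s ^ d2 = 1 →
        eval ![1, t, s] P = ∑ j ∈ Finset.range d2, (g j).eval t * s ^ j := by
  refine ⟨fun j => ∑ m ∈ P.support.filter (fun m => m 2 % d2 = j),
    Polynomial.monomial (m 1 % (q - 1)) (coeff m P), ?_, ?_⟩
  · intro j i h
    simp only [Polynomial.finsetSum_coeff] at h
    obtain ⟨m, hm, h⟩ := Finset.exists_ne_zero_of_sum_ne_zero h
    rw [Finset.mem_filter] at hm
    rw [Polynomial.coeff_monomial] at h
    split_ifs at h with h'
    · have hw := hP h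
      rw [aux_weight] at hw
      have l1 := Nat.mod_lt (m 1) (show 0 < q - 1 by omega)
      have l2 := Nat.mod_le (m 1) (q - 1)
      have l3 : a * j ≤ m 2 * a := by
        rw [← hm.2, mul_comm]
        exact Nat.mul_le_mul_right _ (Nat.mod_le _ _)
      omega
    · exact absurd rfl h
  · intro t s ht hs
    rw [MvPolynomial.eval_eq']
    simp only [Polynomial.eval_finsetSum, Polynomial.eval_monomial, Finset.sum_mul]
    rw [← Finset.sum_fiberwise_of_maps_to (s := P.support) (t := Finset.range d2)
      (g := fun m => m 2 % d2) (fun m _ => Finset.mem_range.2 (Nat.mod_lt _ hd))]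
    refine Finset.sum_congr rfl fun j _ => Finset.sum_congr rfl fun m hm => ?_
    rw [Finset.mem_filter] at hm
    have e1 : t ^ (m 1 % (q - 1)) = t ^ m 1 := (pow_eq_pow_mod _ ht).symm
    have e2 : s ^ j = s ^ m 2 := by rw [← hm.2]; exact (pow_eq_pow_mod _ hs).symm
    rw [e1, e2, Fin.prod_univ_three]
    simp
    ring

theorem aux_hom_lin {F : Type} [Field F] (a : ℕ) (t : F) :
    (X 1 - C t * X 0 : MvPolynomial (Fin 3) F).IsWeightedHomogeneous ![1, 1, a] 1 :=
  (isWeightedHomogeneous_X F ![1, 1, a] 1).sub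
    ((isWeightedHomogeneous_X F ![1, 1, a] 0).C_mul t)

theorem aux_hom_a {F : Type} [Field F] (a : ℕ) (t : F) :
    (X 2 - C t * X 0 ^ a : MvPolynomial (Fin 3) F).IsWeightedHomogeneous ![1, 1, a] a := by
  have h0 : (X 0 ^ a : MvPolynomial (Fin 3) F).IsWeightedHomogeneous ![1, 1, a] a := by
    have := (isWeightedHomogeneous_X F ![1, 1, a] 0).pow a
    simpa using this
  exact (isWeightedHomogeneous_X F ![1, 1, a] 2).sub (h0.C_mul t)

theorem aux_hom_prod {F : Type} [Field F] (a n : ℕ) (K : Finset F)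
    (f : F → MvPolynomial (Fin 3) F) (hf : ∀ t, (f t).IsWeightedHomogeneous ![1, 1, a] n) :
    (∏ t ∈ K, f t).IsWeightedHomogeneous ![1, 1, a] (K.card * n) := by
  have := IsWeightedHomogeneous.prod K f (fun _ => n) (w := ![1, 1, a]) (fun t _ => hf t)
  simpa using this

/-- With `q` the cardinality of a finite field `𝔽`, a positive
integer `a`, weights `(1, 1, a)` on `𝔽[x₀, x₁, x₂]`, `d₂ = (q-1)/gcd(q-1, a)` and
`Y = {(1, t₁, t₂^a) : t₁, t₂ ∈ 𝔽ˣ}`: if `q-2 ≤ α < (q-2) + (d₂-1)a` then the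
minimum distance of `C_{α,Y}` equals `d₂ - k` where `k = ⌊(α-(q-2))/a⌋`: every
nonzero codeword has at least `d₂ - k` nonzero coordinates, and some nonzero
codeword attains this value. -/
theorem stmt10 (F : Type) [Field F] [Fintype F] (q : ℕ) (hq : Fintype.card F = q)
    (a : ℕ) (ha : 0 < a)
    (d2 : ℕ) (hd2 : d2 = (q - 1) / Nat.gcd (q - 1) a)
    (Y : Set (Fin 3 → F))
    (hY : Y = {y | ∃ t1 t2 : Fˣ, y = ![1, (t1 : F), (t2 : F) ^ a]})
    (α : ℕ) (hα1 : q - 2 ≤ α) (hα2 : α < (q - 2) + (d2 - 1) * a)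
    (k : ℕ) (hk : k = (α - (q - 2)) / a) :
    (∀ c ∈ code F ![1, 1, a] α Y, c ≠ 0 →
        d2 - k ≤ {p : Y | c p ≠ 0}.ncard) ∧
      ∃ c ∈ code F ![1, 1, a] α Y, c ≠ 0 ∧
        {p : Y | c p ≠ 0}.ncard = d2 - k := by
  classical
  have hq2 : 2 ≤ q := hq ▸ Fintype.one_lt_card
  set U : Finset F := Finset.univ.erase 0 with hUdef
  have hU : U.card = q - 1 := by
    rw [hUdef, Finset.card_erase_of_mem (Finset.mem_univ _), Finset.card_univ, hq]
  set H : Finset F := Finset.univ.image (fun t : Fˣ => (t : F) ^ a) with hHdef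
  have hcU : Nat.card Fˣ = q - 1 := by
    rw [Nat.card_eq_fintype_card, Fintype.card_units, hq]
  have hH : H.card = d2 := by
    have h := IsCyclic.card_powMonoidHom_range Fˣ a
    rw [hcU, ← hd2] at h
    rw [← h, ← Set.ncard_coe_finset, ← SetLike.coe_sort_coe, Nat.card_coe_set_eq,
      ← Set.ncard_image_of_injective _ (Units.val_injective (α := F))]
    congr 1
    ext x
    simp [hHdef]
  have hd : 0 < d2 := by
    rcases Nat.eq_zero_or_pos d2 with h | h
    · subst h; simp at hα2; omega
    · exact h
  have hYm : ∀ y, y ∈ Y ↔ ∃ t ∈ U, ∃ s ∈ H, y = ![1, t, s] := by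
    intro y
    rw [hY]
    constructor
    · rintro ⟨t1, t2, rfl⟩
      exact ⟨t1, by simp [hUdef], _, by simp [hHdef], rfl⟩
    · rintro ⟨t, ht, s, hs, rfl⟩
      simp only [hHdef, Finset.mem_image, Finset.mem_univ, true_and] at hs
      obtain ⟨t2, rfl⟩ := hs
      have ht0 : t ≠ 0 := (Finset.mem_erase.1 ht).1
      exact ⟨Units.mk0 t ht0, t2, rfl⟩
  have hUpow : ∀ t ∈ U, t ^ (q - 1) = 1 := by
    intro t ht
    rw [← hq]
    exact FiniteField.pow_card_sub_one_eq_one t (Finset.mem_erase.1 ht).1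
  have hHpow : ∀ s ∈ H, s ^ d2 = 1 := by
    intro s hs
    simp only [hHdef, Finset.mem_image, Finset.mem_univ, true_and] at hs
    obtain ⟨t, rfl⟩ := hs
    have hdiv : a * d2 = (q - 1) * (a / Nat.gcd (q - 1) a) := by
      rw [hd2, ← Nat.mul_div_assoc _ (Nat.gcd_dvd_left _ _),
        ← Nat.mul_div_assoc _ (Nat.gcd_dvd_right _ _), mul_comm]
    rw [← pow_mul, hdiv, pow_mul, hUpow _ (by simp [hUdef]), one_pow]
  constructor
  · rintro c hc hc0
    obtain ⟨P, hP, rfl⟩ := hc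
    obtain ⟨g, hg, hev⟩ := aux_reduce q a d2 α hq2 hd P hP
    have hval : ∀ p : Y, evalOn F Y P p
        = ∑ j ∈ Finset.range d2, (g j).eval (p.1 1) * (p.1 2) ^ j := by
      rintro ⟨y, hy⟩
      obtain ⟨t, ht, s, hs, rfl⟩ := (hYm y).1 hy
      exact hev t s (hUpow t ht) (hHpow s hs)
    rw [aux_count U H Y hYm _
      (fun t s => ∑ j ∈ Finset.range d2, (g j).eval t * s ^ j) hval]
    refine aux_lower U H q a d2 α k ha hq2 hα1 hk hU hH g hg ?_
    by_contra hcon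
    push Not at hcon
    apply hc0
    funext p
    rw [hval]
    exact Finset.sum_eq_zero fun j hj => by rw [hcon j hj]; simp
  · have hkd : k < d2 - 1 := by
      rw [hk, Nat.div_lt_iff_lt_mul ha]
      omega
    have hka : k * a ≤ α - (q - 2) := by rw [hk]; exact Nat.div_mul_le_self _ _
    obtain ⟨K, hKH, hK⟩ := Finset.exists_subset_card_eq (s := H) (n := k) (by omega)
    have h1U : (1 : F) ∈ U := by simp [hUdef]
    let P : MvPolynomial (Fin 3) F := (∏ t ∈ U.erase 1, (X 1 - C t * X 0)) *
      (∏ s ∈ K, (X 2 - C s * X 0 ^ a)) * X 0 ^ (α - (q - 2) - k * a)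
    have hP : P.IsWeightedHomogeneous ![1, 1, a] α := by
      have h1 := aux_hom_prod a 1 (U.erase 1) _ (fun t : F => aux_hom_lin a t)
      have h2 := aux_hom_prod a a K _ (fun t : F => aux_hom_a a t)
      have h3 := (isWeightedHomogeneous_X F ![1, 1, a] 0).pow (α - (q - 2) - k * a)
      have h := (h1.mul h2).mul h3
      have e : (U.erase 1).card * 1 + K.card * a
          + (α - (q - 2) - k * a) • (![1, 1, a] : Fin 3 → ℕ) 0 = α := by
        rw [Finset.card_erase_of_mem h1U, hU, hK]
        simp
        omega
      rw [e] at h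
      exact h
    have hval : ∀ p : Y, evalOn F Y P p
        = (fun t s => (∏ u ∈ U.erase 1, (t - u)) * ∏ u ∈ K, (s - u)) (p.1 1) (p.1 2) := by
      rintro ⟨y, hy⟩
      obtain ⟨t, ht, s, hs, rfl⟩ := (hYm y).1 hy
      simp [evalOn, P, eval_prod]
    have hcard : {p : Y | evalOn F Y P p ≠ 0}.ncard = d2 - k := by
      rw [aux_count U H Y hYm _
        (fun t s => (∏ u ∈ U.erase 1, (t - u)) * ∏ u ∈ K, (s - u)) hval]
      have e : (U ×ˢ H).filter (fun p : F × F =>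
          (fun t s => (∏ u ∈ U.erase 1, (t - u)) * ∏ u ∈ K, (s - u)) p.1 p.2 ≠ 0)
          = {1} ×ˢ (H \ K) := by
        ext ⟨t, s⟩
        simp only [Finset.mem_filter, Finset.mem_product, Finset.mem_singleton,
          Finset.mem_sdiff, mul_ne_zero_iff, Finset.prod_ne_zero_iff, sub_ne_zero]
        constructor
        · rintro ⟨⟨ht, hs⟩, h1, h2⟩
          refine ⟨?_, hs, fun h => h2 s h rfl⟩
          by_contra h
          exact h1 t (Finset.mem_erase.2 ⟨h, ht⟩) rfl
        · rintro ⟨rfl, hs, hsK⟩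
          refine ⟨⟨h1U, hs⟩, ?_, ?_⟩
          · rintro u hu rfl
            exact (Finset.mem_erase.1 hu).1 rfl
          · rintro u hu rfl
            exact hsK hu
      rw [e, Finset.card_product, Finset.card_sdiff_of_subset hKH, hH, hK]
      simp
    refine ⟨evalOn F Y P, ⟨P, hP, rfl⟩, ?_, hcard⟩
    intro h0
    rw [h0] at hcard
    simp at hcard
    omega
end

section
/- Let q be a prime power, a a positive integer, and use weights (1, 1, a) on 𝔽_q[x_0, x_1, x_2]. Set d_2 = (q−1)/gcd(q−1, a) and Y = {(1, t_1, t_2^a) : t_1, t_2 ∈ 𝔽_q^×} ⊆ 𝔽_q^3. If α ≥ (q−2) + (d_2 − 1)a, then the minimum distance of the code C_{α,Y} equals 1; that is, there is a codeword c ∈ C_{α,Y} that is nonzero at exactly one point of Y. -/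
open MvPolynomial

/-- With `q` the cardinality of a finite field `𝔽`, a positive
integer `a`, weights `(1, 1, a)` on `𝔽[x₀, x₁, x₂]`, `d₂ = (q-1)/gcd(q-1, a)` and
`Y = {(1, t₁, t₂^a) : t₁, t₂ ∈ 𝔽ˣ}`: if `α ≥ (q-2) + (d₂-1)a` then the minimum
distance of `C_{α,Y}` equals `1`, i.e. some codeword is nonzero at exactly one
point of `Y`. -/
theorem stmt11 (F : Type) [Field F] [Fintype F] (q : ℕ) (hq : Fintype.card F = q)
    (a : ℕ) (ha : 0 < a)
    (d2 : ℕ) (hd2 : d2 = (q - 1) / Nat.gcd (q - 1) a)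
    (Y : Set (Fin 3 → F))
    (hY : Y = {y | ∃ t1 t2 : Fˣ, y = ![1, (t1 : F), (t2 : F) ^ a]})
    (α : ℕ) (hα : (q - 2) + (d2 - 1) * a ≤ α) :
    ∃ c ∈ code F ![1, 1, a] α Y, {p : Y | c p ≠ 0}.ncard = 1 := by
  classical
  let A : Finset Fˣ := Finset.univ.erase 1
  let B : Finset Fˣ := (Finset.univ.image (fun t : Fˣ => t ^ a)).erase 1
  have hcu : Fintype.card Fˣ = q - 1 := by rw [Fintype.card_units, hq]
  have hA : A.card = q - 2 := by
    have : A.card = Fintype.card Fˣ - 1 := by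
      simp only [A]
      rw [Finset.card_erase_of_mem (Finset.mem_univ _), Finset.card_univ]
    omega
  have hB : B.card = d2 - 1 := by
    have h1 : (1 : Fˣ) ∈ Finset.univ.image (fun t : Fˣ => t ^ a) :=
      Finset.mem_image.2 ⟨1, Finset.mem_univ _, one_pow _⟩
    have h2 : (Finset.univ.image (fun t : Fˣ => t ^ a)).card = d2 := by
      have h3 := IsCyclic.card_powMonoidHom_range (G := Fˣ) a
      rw [Nat.card_eq_fintype_card (α := Fˣ), hcu, ← hd2] at h3
      rw [← h3, ← Set.ncard_coe_finset, ← Nat.card_coe_set_eq]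
      have : ((Finset.univ.image (fun t : Fˣ => t ^ a) : Finset Fˣ) : Set Fˣ)
          = ((powMonoidHom a : Fˣ →* Fˣ).range : Set Fˣ) := by
        ext x; simp
      rw [this]
      rfl
    simp only [B]
    rw [Finset.card_erase_of_mem h1, h2]
  let P : MvPolynomial (Fin 3) F :=
    X 0 ^ (α - ((q - 2) + (d2 - 1) * a)) *
      ((∏ b ∈ A, (X 1 - C (b : F) * X 0)) * ∏ b ∈ B, (X 2 - C (b : F) * X 0 ^ a))
  have hX0 : IsWeightedHomogeneous ![1, 1, a] (X 0 : MvPolynomial (Fin 3) F) 1 :=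
    isWeightedHomogeneous_X F ![1, 1, a] 0
  have hX1 : IsWeightedHomogeneous ![1, 1, a] (X 1 : MvPolynomial (Fin 3) F) 1 :=
    isWeightedHomogeneous_X F ![1, 1, a] 1
  have hX2 : IsWeightedHomogeneous ![1, 1, a] (X 2 : MvPolynomial (Fin 3) F) a :=
    isWeightedHomogeneous_X F ![1, 1, a] 2
  have hP : IsWeightedHomogeneous ![1, 1, a] P α := by
    have e1 := hX0.pow (α - ((q - 2) + (d2 - 1) * a))
    have e2 := IsWeightedHomogeneous.prod A (fun b => (X 1 - C (b : F) * X 0))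
      (fun _ => 1) (w := ![1, 1, a]) (fun b _ => hX1.sub (hX0.C_mul (b : F)))
    have e3 := IsWeightedHomogeneous.prod B (fun b => (X 2 - C (b : F) * X 0 ^ a))
      (fun _ => a) (w := ![1, 1, a]) (fun b _ => hX2.sub (by
        have := (hX0.pow a).C_mul (b : F)
        simpa using this))
    have e := e1.mul (e2.mul e3)
    simp only [Finset.sum_const, hA, hB, smul_eq_mul, mul_one] at e
    rwa [Nat.sub_add_cancel hα] at e
  have hmem : (![1, 1, 1] : Fin 3 → F) ∈ Y := by
    rw [hY]; exact ⟨1, 1, by simp⟩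
  refine ⟨evalOn F Y P, ⟨P, hP, rfl⟩, ?_⟩
  rw [Set.ncard_eq_one]
  refine ⟨⟨_, hmem⟩, ?_⟩
  ext ⟨y, hy⟩
  have hy2 := hy
  rw [hY] at hy2
  obtain ⟨t1, t2, rfl⟩ := hy2
  have hev : evalOn F Y P ⟨![1, (t1 : F), (t2 : F) ^ a], hy⟩ =
      (∏ b ∈ A, ((t1 : F) - b)) * ∏ b ∈ B, ((t2 : F) ^ a - b) := by
    simp [evalOn, P, map_prod]
  simp only [Set.mem_setOf_eq, Set.mem_singleton_iff, Subtype.mk.injEq]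
  rw [hev, mul_ne_zero_iff, Finset.prod_ne_zero_iff, Finset.prod_ne_zero_iff]
  constructor
  · rintro ⟨h1, h2⟩
    have k1 : t1 = 1 := by
      by_contra h
      exact h1 t1 (Finset.mem_erase.2 ⟨h, Finset.mem_univ _⟩) (sub_self _)
    have k2 : t2 ^ a = 1 := by
      by_contra h
      exact h2 (t2 ^ a) (Finset.mem_erase.2 ⟨h, Finset.mem_image_of_mem _ (Finset.mem_univ _)⟩)
        (by simp)
    have k3 : (t2 : F) ^ a = 1 := by
      rw [← Units.val_pow_eq_pow_val, k2, Units.val_one]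
    rw [k1, k3, Units.val_one]
  · intro h
    have k1 : (t1 : F) = 1 := by simpa using congrFun h 1
    have k3 : (t2 : F) ^ a = 1 := by simpa using congrFun h 2
    rw [k1, k3]
    constructor
    · intro b hb h0
      exact (Finset.mem_erase.1 hb).1 (Units.ext (sub_eq_zero.1 h0).symm)
    · intro b hb h0
      exact (Finset.mem_erase.1 hb).1 (Units.ext (sub_eq_zero.1 h0).symm)
end

section
/- Let q be a prime power, a a positive integer, and use weights (1, 1, a) on 𝔽_q[x_0, x_1, x_2]. Let η be a generator of the cyclic group 𝔽_q^×, set d_2 = (q−1)/gcd(q−1, a), and let Y = {(1, t_1, t_2^a) : t_1, t_2 ∈ 𝔽_q^×} ⊆ 𝔽_q^3. For a weighted homogeneous polynomial F ∈ 𝔽_q[x_0, x_1, x_2] of degree α, let J_F = {j ∈ {0, 1, …, d_2−1} : the polynomial x_2 − η^{aj} x_0^a divides F}. Then the number of points P ∈ Y with F(P) = 0 is at most (q−1)·|J_F| + (d_2 − |J_F|)·deg_{x_1}(F), where deg_{x_1}(F) is the degree of F in the variable x_1. -/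
open MvPolynomial

/-- Specialization of `P` to `(1, X, c)`. -/
noncomputable def slicePoly {F : Type} [Field F] (c : F) (P : MvPolynomial (Fin 3) F) :
    Polynomial F :=
  aeval ![1, Polynomial.X, Polynomial.C c] P

theorem slicePoly_eq {F : Type} [Field F] (c : F) (P : MvPolynomial (Fin 3) F) :
    slicePoly c P = ∑ m ∈ P.support, Polynomial.monomial (m 1) (coeff m P * c ^ (m 2)) := by
  rw [slicePoly, aeval_def, eval₂_eq']
  refine Finset.sum_congr rfl fun m _ => ?_
  simp [Fin.prod_univ_three, ← Polynomial.C_mul_X_pow_eq_monomial]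
  ring

theorem slicePoly_natDegree {F : Type} [Field F] (c : F) (P : MvPolynomial (Fin 3) F) :
    (slicePoly c P).natDegree ≤ degreeOf 1 P := by
  rw [slicePoly_eq]
  refine Polynomial.natDegree_sum_le_of_forall_le _ _ fun m hm => ?_
  exact (Polynomial.natDegree_monomial_le _).trans (monomial_le_degreeOf 1 hm)

theorem slicePoly_eval {F : Type} [Field F] (c t : F) (P : MvPolynomial (Fin 3) F) :
    (slicePoly c P).eval t = eval ![1, t, c] P := by
  rw [slicePoly_eq, eval_eq', Polynomial.eval_finset_sum]
  refine Finset.sum_congr rfl fun m _ => ?_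
  simp [Fin.prod_univ_three]
  ring

theorem dvd_of_slicePoly {F : Type} [Field F] (c : F) (a α : ℕ) (P : MvPolynomial (Fin 3) F)
    (hP : IsWeightedHomogeneous ![1, 1, a] P α) (h : slicePoly c P = 0) :
    (X 2 - C c * X 0 ^ a : MvPolynomial (Fin 3) F) ∣ P := by
  set v : Fin 3 → MvPolynomial (Fin 3) F := ![X 0, X 1, C c * X 0 ^ a] with hv
  have hQ : aeval v P = 0 := by
    let L := (Polynomial.basisMonomials F).constr F
      (fun k => (X 0 ^ (α - k) * X 1 ^ k : MvPolynomial (Fin 3) F))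
    have hL : ∀ k (r : F), L (Polynomial.monomial k r) = C r * (X 0 ^ (α - k) * X 1 ^ k) := by
      intro k r
      have h1 : Polynomial.monomial k r = r • Polynomial.basisMonomials F k := by
        simp [Polynomial.smul_monomial]
      rw [h1, map_smul, Module.Basis.constr_basis, smul_eq_C_mul]
    have : aeval v P = L (slicePoly c P) := by
      rw [slicePoly_eq, map_sum, aeval_def, eval₂_eq']
      refine Finset.sum_congr rfl fun m hm => ?_
      rw [hL]
      have hw := hP (mem_support_iff.mp hm)
      rw [Finsupp.weight_apply, Finsupp.sum_fintype _ _ (by simp)] at hw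
      simp [Fin.sum_univ_three] at hw
      have : α - m 1 = m 0 + a * m 2 := by rw [mul_comm a]; omega
      rw [this]
      simp [Fin.prod_univ_three, hv, algebraMap_eq]
      ring
    rw [this, h, map_zero]
  rw [← Ideal.mem_span_singleton, ← Ideal.Quotient.eq_zero_iff_mem]
  set I : Ideal (MvPolynomial (Fin 3) F) := Ideal.span {X 2 - C c * X 0 ^ a}
  have key : Ideal.Quotient.mkₐ F I = (Ideal.Quotient.mkₐ F I).comp (aeval v) := by
    apply MvPolynomial.algHom_ext
    intro i
    rw [AlgHom.comp_apply, aeval_X]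
    fin_cases i
    · rfl
    · rfl
    · exact Ideal.Quotient.eq.mpr (Ideal.mem_span_singleton_self _)
  have := congrArg (fun f => f P) key
  simp only [AlgHom.comp_apply, hQ, map_zero] at this
  exact this

theorem stmt13 (F : Type) [Field F] [Fintype F] (q : ℕ) (hq : Fintype.card F = q)
    (a : ℕ) (ha : 0 < a)
    (η : Fˣ) (hη : ∀ x : Fˣ, x ∈ Subgroup.zpowers η)
    (d2 : ℕ) (hd2 : d2 = (q - 1) / Nat.gcd (q - 1) a)
    (Y : Set (Fin 3 → F))
    (hY : Y = {y | ∃ t1 t2 : Fˣ, y = ![1, (t1 : F), (t2 : F) ^ a]})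
    (P : MvPolynomial (Fin 3) F) (α : ℕ)
    (hP : IsWeightedHomogeneous ![1, 1, a] P α)
    (J : Finset ℕ)
    (hJ : ∀ j, j ∈ J ↔ j < d2 ∧
      ((X 2 - C ((η : F) ^ (a * j)) * X 0 ^ a : MvPolynomial (Fin 3) F) ∣ P)) :
    {y ∈ Y | eval y P = 0}.ncard ≤
      (q - 1) * J.card + (d2 - J.card) * degreeOf 1 P := by
  classical
  have hcard : Fintype.card Fˣ = q - 1 := by rw [Fintype.card_units, hq]
  have hpow : η ^ (a * d2) = 1 := by
    have : q - 1 ∣ a * d2 := by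
      rw [hd2, ← Nat.mul_div_assoc _ (Nat.gcd_dvd_left _ _), mul_comm,
        Nat.mul_div_assoc _ (Nat.gcd_dvd_right _ _)]
      exact Dvd.intro _ rfl
    obtain ⟨k, hk⟩ := this
    rw [hk, pow_mul, ← hcard, pow_card_eq_one, one_pow]
  have hd2pos : 0 < d2 := by
    have hq1 : 0 < q - 1 := hcard ▸ Fintype.card_pos
    rw [hd2]
    exact Nat.div_pos (Nat.le_of_dvd hq1 (Nat.gcd_dvd_left _ _)) (Nat.gcd_pos_of_pos_left _ hq1)
  let T : ℕ → Finset Fˣ := fun j =>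
    Finset.univ.filter fun t : Fˣ => eval ![1, (t : F), (η : F) ^ (a * j)] P = 0
  let S : Finset (Fin 3 → F) := (Finset.range d2).biUnion fun j =>
    (T j).image fun t : Fˣ => ![1, (t : F), (η : F) ^ (a * j)]
  have hsub : {y ∈ Y | eval y P = 0} ⊆ (S : Set (Fin 3 → F)) := by
    rintro y ⟨hyY, hy0⟩
    rw [hY] at hyY
    obtain ⟨t1, t2, rfl⟩ := hyY
    obtain ⟨k, hk⟩ := (mem_powers_iff_mem_zpowers).mpr (hη t2)
    have hk : η ^ k = t2 := hk
    have e : (t2 : F) ^ a = (η : F) ^ (a * (k % d2)) := by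
      rw [← hk]
      norm_cast
      conv_lhs => rw [← Nat.div_add_mod k d2]
      rw [← pow_mul, add_mul, pow_add, mul_comm (k % d2) a,
        show d2 * (k / d2) * a = a * d2 * (k / d2) by ring, pow_mul η (a * d2), hpow, one_pow,
        one_mul]
    rw [e] at hy0 ⊢
    simp only [S, Finset.coe_biUnion, Set.mem_iUnion, Finset.mem_coe, Finset.mem_image]
    exact ⟨k % d2, Finset.mem_range.mpr (Nat.mod_lt _ hd2pos), t1, by simpa [T] using hy0, rfl⟩
  have hT : ∀ j ∈ Finset.range d2, (T j).card ≤ if j ∈ J then q - 1 else degreeOf 1 P := by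
    intro j hj
    split_ifs with hjJ
    · exact hcard ▸ Finset.card_le_univ _
    · have hne : slicePoly ((η : F) ^ (a * j)) P ≠ 0 := fun h0 =>
        hjJ ((hJ j).mpr ⟨Finset.mem_range.mp hj, dvd_of_slicePoly _ a α P hP h0⟩)
      refine le_trans ?_ (slicePoly_natDegree ((η : F) ^ (a * j)) P)
      refine le_trans ?_ (Polynomial.card_roots' _)
      refine le_trans ?_ (Multiset.toFinset_card_le _)
      refine Finset.card_le_card_of_injOn (fun t : Fˣ => (t : F)) ?_ (Units.val_injective.injOn)
      intro t ht
      have ht : eval ![1, (t : F), (η : F) ^ (a * j)] P = 0 := by simpa [T] using ht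
      simp only [Finset.mem_coe, Multiset.mem_toFinset]
      rw [Polynomial.mem_roots hne, Polynomial.IsRoot.def, slicePoly_eval, ht]
  have hJsub : J ⊆ Finset.range d2 := fun j hj => Finset.mem_range.mpr ((hJ j).mp hj).1
  calc {y ∈ Y | eval y P = 0}.ncard ≤ (S : Set (Fin 3 → F)).ncard :=
        Set.ncard_le_ncard hsub (Finset.finite_toSet _)
    _ = S.card := Set.ncard_coe_finset _
    _ ≤ ∑ j ∈ Finset.range d2, (T j).card :=
        Finset.card_biUnion_le.trans (Finset.sum_le_sum fun j _ => Finset.card_image_le)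
    _ ≤ ∑ j ∈ Finset.range d2, (if j ∈ J then q - 1 else degreeOf 1 P) := Finset.sum_le_sum hT
    _ = (q - 1) * J.card + (d2 - J.card) * degreeOf 1 P := by
        rw [← Finset.sum_sdiff hJsub, add_comm]
        congr 1
        · rw [Finset.sum_congr rfl (fun j hj => if_pos hj)]
          simp [mul_comm]
        · rw [Finset.sum_congr rfl (fun j hj => if_neg (Finset.mem_sdiff.mp hj).2)]
          simp [Finset.card_sdiff_of_subset hJsub]
end

section
/- Let q be a prime power, a a positive integer, and use weights (1, 1, a) on 𝔽_q[x_0, x_1, x_2]. Set d_2 = (q−1)/gcd(q−1, a) and Y = {(1, t_1, t_2^a) : t_1, t_2 ∈ 𝔽_q^×} ⊆ 𝔽_q^3. If F ∈ 𝔽_q[x_0, x_1, x_2] is weighted homogeneous of degree α and there exists a point P ∈ Y with F(P) ≠ 0, then the number of points P ∈ Y with F(P) = 0 is at most d_2·α. -/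
open MvPolynomial

/-- Coefficient (as a polynomial in `x₁`) of `x₂^j` in `P(1, x₁, x₂)`. -/
noncomputable def coeffPoly {F : Type} [Field F] (P : MvPolynomial (Fin 3) F) (j : ℕ) :
    Polynomial F :=
  ∑ m ∈ P.support.filter (fun m => m 2 = j), Polynomial.C (P.coeff m) * Polynomial.X ^ (m 1)

theorem wt_eq {F : Type} [Field F] (P : MvPolynomial (Fin 3) F) (a α : ℕ)
    (hP : IsWeightedHomogeneous ![1, 1, a] P α) (m : Fin 3 →₀ ℕ) (hm : m ∈ P.support) :
    m 0 + m 1 + m 2 * a = α := by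
  have h := hP (mem_support_iff.mp hm)
  rw [Finsupp.weight_apply, Finsupp.sum_fintype _ _ (by simp)] at h
  simpa [Fin.sum_univ_three] using h

theorem eval_eq_sum_coeffPoly {F : Type} [Field F] (P : MvPolynomial (Fin 3) F) (a α : ℕ)
    (ha : 0 < a) (hP : IsWeightedHomogeneous ![1, 1, a] P α) (t s : F) :
    eval ![1, t, s] P = ∑ j ∈ Finset.range (α + 1), (coeffPoly P j).eval t * s ^ j := by
  rw [MvPolynomial.eval_eq']
  rw [← Finset.sum_fiberwise_of_maps_to (s := P.support) (t := Finset.range (α + 1))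
    (g := fun m => m 2)]
  · refine Finset.sum_congr rfl fun j _ => ?_
    rw [coeffPoly, Polynomial.eval_finsetSum, Finset.sum_mul]
    refine Finset.sum_congr rfl fun m hm => ?_
    have := (Finset.mem_filter.mp hm).2
    simp [Fin.prod_univ_three, this, mul_assoc]
  · intro m hm
    have := wt_eq P a α hP m hm
    rw [Finset.mem_range]
    nlinarith

theorem coeffPoly_natDegree {F : Type} [Field F] (P : MvPolynomial (Fin 3) F) (a α : ℕ)
    (hP : IsWeightedHomogeneous ![1, 1, a] P α) (j : ℕ) (hj : coeffPoly P j ≠ 0) :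
    (coeffPoly P j).natDegree + j * a ≤ α := by
  have h1 : (coeffPoly P j).natDegree ≤ α - j * a := by
    refine Polynomial.natDegree_sum_le_of_forall_le _ _ fun m hm => ?_
    refine (Polynomial.natDegree_C_mul_X_pow_le _ _).trans ?_
    obtain ⟨hm', rfl⟩ := Finset.mem_filter.mp hm
    have := wt_eq P a α hP m hm'
    omega
  obtain ⟨m, hm, -⟩ := Finset.exists_ne_zero_of_sum_ne_zero hj
  obtain ⟨hm', rfl⟩ := Finset.mem_filter.mp hm
  have := wt_eq P a α hP m hm'
  omega

theorem stmt14 (F : Type) [Field F] [Fintype F] (q : ℕ) (hq : Fintype.card F = q)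
    (a : ℕ) (ha : 0 < a)
    (d2 : ℕ) (hd2 : d2 = (q - 1) / Nat.gcd (q - 1) a)
    (Y : Set (Fin 3 → F))
    (hY : Y = {y | ∃ t1 t2 : Fˣ, y = ![1, (t1 : F), (t2 : F) ^ a]})
    (P : MvPolynomial (Fin 3) F) (α : ℕ)
    (hP : IsWeightedHomogeneous ![1, 1, a] P α)
    (hne : ∃ p ∈ Y, eval p P ≠ 0) :
    {y ∈ Y | eval y P = 0}.ncard ≤ d2 * α := by
  classical
  subst hY
  have hcU : Fintype.card Fˣ = q - 1 := by rw [Fintype.card_units, hq]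
  let G : Finset F := Finset.univ.image (fun u : Fˣ => (u : F) ^ a)
  have hG : G.card = d2 := by
    have h1 : G = (Finset.univ.image (fun u : Fˣ => u ^ a)).image (fun u : Fˣ => (u : F)) := by
      ext x; simp [G]
    rw [h1, Finset.card_image_of_injective _ Units.val_injective, hd2, ← hcU,
      ← Nat.card_eq_fintype_card, ← IsCyclic.card_powMonoidHom_range, ← Set.ncard_coe_finset]
    rw [← Nat.card_coe_set_eq]
    refine Nat.card_congr (Equiv.setCongr ?_)
    ext x
    simp
  have hqa : q - 1 ≤ d2 * a := by
    rw [hd2]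
    have hpos : 0 < Nat.gcd (q - 1) a := Nat.gcd_pos_of_pos_right _ ha
    calc q - 1 = (q - 1) / Nat.gcd (q - 1) a * Nat.gcd (q - 1) a :=
          (Nat.div_mul_cancel (Nat.gcd_dvd_left _ _)).symm
      _ ≤ _ := Nat.mul_le_mul_left _ (Nat.gcd_le_right _ ha)
  have hev := eval_eq_sum_coeffPoly P a α ha hP
  -- the top index
  let S : Finset ℕ := (Finset.range (α + 1)).filter
    (fun j => ∃ t : Fˣ, (coeffPoly P j).eval (t : F) ≠ 0)
  have hS : S.Nonempty := by
    obtain ⟨p, ⟨t1, t2, rfl⟩, hp⟩ := hne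
    rw [hev] at hp
    obtain ⟨j, hj, hj'⟩ := Finset.exists_ne_zero_of_sum_ne_zero hp
    exact ⟨j, Finset.mem_filter.mpr ⟨hj, t1, left_ne_zero_of_mul hj'⟩⟩
  obtain ⟨J, hJS, hJmax⟩ := S.exists_max_image id hS
  obtain ⟨hJr, t0, ht0⟩ := Finset.mem_filter.mp hJS
  have hfJ : coeffPoly P J ≠ 0 := by
    intro h; simp [h] at ht0
  have hdeg := coeffPoly_natDegree P a α hP J hfJ
  let g : F → Polynomial F := fun t =>
    ∑ j ∈ Finset.range (J + 1), Polynomial.C ((coeffPoly P j).eval t) * Polynomial.X ^ j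
  have hg : ∀ t : Fˣ, ∀ s : F, eval ![1, (t : F), s] P = (g t).eval s := by
    intro t s
    rw [hev, Polynomial.eval_finsetSum]
    simp only [Polynomial.eval_mul, Polynomial.eval_C, Polynomial.eval_pow, Polynomial.eval_X]
    symm
    refine Finset.sum_subset ?_ ?_
    · intro j hj; rw [Finset.mem_range] at *; omega
    · intro j hj hj'
      have : (coeffPoly P j).eval (t : F) = 0 := by
        by_contra h
        have := hJmax j (Finset.mem_filter.mpr ⟨hj, t, h⟩)
        simp only [id, Finset.mem_range] at *
        omega
      rw [this, zero_mul]
  have hgdeg : ∀ t, (g t).natDegree ≤ J := by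
    intro t
    refine Polynomial.natDegree_sum_le_of_forall_le _ _ fun j hj => ?_
    refine (Polynomial.natDegree_C_mul_X_pow_le _ _).trans ?_
    rw [Finset.mem_range] at hj; omega
  have hgne : ∀ t, (coeffPoly P J).eval t ≠ 0 → g t ≠ 0 := by
    intro t ht h
    have h2 : (g t).coeff J = (coeffPoly P J).eval t := by
      simp [g, Polynomial.coeff_C_mul, Polynomial.coeff_X_pow]
    rw [h] at h2
    exact ht (by simpa using h2.symm)
  let B : Finset F := (coeffPoly P J).roots.toFinset
  let T : Finset (F × F) := (B ×ˢ G) ∪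
    (Finset.univ : Finset Fˣ).biUnion
      (fun t => (g t).roots.toFinset.image (fun s => ((t : F), s)))
  have hsub : {y ∈ {y : Fin 3 → F | ∃ t1 t2 : Fˣ, y = ![1, (t1 : F), (t2 : F) ^ a]} |
      eval y P = 0} ⊆ ((T.image (fun p => ![1, p.1, p.2]) : Finset (Fin 3 → F)) :
        Set (Fin 3 → F)) := by
    rintro y ⟨⟨t1, t2, rfl⟩, hy⟩
    rw [Finset.mem_coe, Finset.mem_image]
    refine ⟨((t1 : F), (t2 : F) ^ a), ?_, rfl⟩
    rw [Finset.mem_union]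
    by_cases h : (coeffPoly P J).eval (t1 : F) = 0
    · left
      rw [Finset.mem_product]
      refine ⟨?_, Finset.mem_image.mpr ⟨t2, Finset.mem_univ _, rfl⟩⟩
      simp [B, hfJ, h]
    · right
      rw [Finset.mem_biUnion]
      refine ⟨t1, Finset.mem_univ _, Finset.mem_image.mpr ⟨_, ?_, rfl⟩⟩
      rw [Multiset.mem_toFinset, Polynomial.mem_roots (hgne _ h), Polynomial.IsRoot, ← hg]
      exact hy
  have hBc : B.card ≤ (coeffPoly P J).natDegree :=
    (Multiset.toFinset_card_le _).trans (Polynomial.card_roots' _)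
  have hTc : T.card ≤ B.card * d2 + (q - 1) * J := by
    refine (Finset.card_union_le _ _).trans ?_
    rw [Finset.card_product, hG]
    refine Nat.add_le_add_left ?_ _
    rw [← hcU, ← Finset.card_univ]
    refine Finset.card_biUnion_le_card_mul _ _ _ fun t _ => ?_
    exact Finset.card_image_le.trans ((Multiset.toFinset_card_le _).trans
      ((Polynomial.card_roots' _).trans (hgdeg _)))
  have h1 := Set.ncard_le_ncard hsub (Finset.finite_toSet _)
  rw [Set.ncard_coe_finset] at h1
  calc _ ≤ _ := h1
    _ ≤ T.card := Finset.card_image_le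
    _ ≤ _ := hTc
    _ ≤ (coeffPoly P J).natDegree * d2 + (d2 * a) * J := by gcongr
    _ = d2 * ((coeffPoly P J).natDegree + J * a) := by ring
    _ ≤ d2 * α := by gcongr
end

section
/- Let q be a prime power and let w_1, w_2 be positive integers; use weights (1, w_1, w_2) on 𝔽_q[x_0, x_1, x_2]. Set d_1 = (q−1)/gcd(q−1, w_1), d_2 = (q−1)/gcd(q−1, w_2), and Y = {(1, t_1^{w_1}, t_2^{w_2}) : t_1, t_2 ∈ 𝔽_q^×} ⊆ 𝔽_q^3. If 0 ≤ α ≤ w_1(d_1 − 1), then the minimum distance of the code C_{α,Y} is at most d_2·(d_1 − ⌊α/w_1⌋); that is, there exists a nonzero codeword c ∈ C_{α,Y} with #{P ∈ Y : c(P) ≠ 0} ≤ d_2·(d_1 − ⌊α/w_1⌋). -/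
open MvPolynomial

theorem card_powers (F : Type) [Field F] [Fintype F] [DecidableEq F] (w : ℕ) :
    (Finset.univ.image (fun t : Fˣ => (t : F) ^ w)).card =
      (Fintype.card F - 1) / Nat.gcd (Fintype.card F - 1) w := by
  classical
  have h := IsCyclic.card_powMonoidHom_range (G := Fˣ) w
  rw [Nat.card_units, Nat.card_eq_fintype_card (α := F)] at h
  rw [← h, ← SetLike.coe_sort_coe, Nat.card_coe_set_eq, ← Set.ncard_coe_finset]
  rw [← Set.ncard_image_of_injective _ (Units.val_injective (α := F))]
  congr 1
  ext x
  simp [MonoidHom.mem_range]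

/-- With `q` the cardinality of a finite field `𝔽`, positive
integers `w₁, w₂`, weights `(1, w₁, w₂)` on `𝔽[x₀, x₁, x₂]`,
`dᵢ = (q-1)/gcd(q-1, wᵢ)` and `Y = {(1, t₁^{w₁}, t₂^{w₂}) : t₁, t₂ ∈ 𝔽ˣ}`:
if `0 ≤ α ≤ w₁(d₁-1)` then the minimum distance of `C_{α,Y}` is at most
`d₂(d₁ - ⌊α/w₁⌋)`, i.e. some nonzero codeword has at most that many nonzero
coordinates. -/
theorem stmt15 (F : Type) [Field F] [Fintype F] (q : ℕ) (hq : Fintype.card F = q)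
    (w1 w2 : ℕ) (hw1 : 0 < w1) (hw2 : 0 < w2)
    (d1 d2 : ℕ) (hd1 : d1 = (q - 1) / Nat.gcd (q - 1) w1)
    (hd2 : d2 = (q - 1) / Nat.gcd (q - 1) w2)
    (Y : Set (Fin 3 → F))
    (hY : Y = {y | ∃ t1 t2 : Fˣ, y = ![1, (t1 : F) ^ w1, (t2 : F) ^ w2]})
    (α : ℕ) (hα : α ≤ w1 * (d1 - 1)) :
    ∃ c ∈ code F ![1, w1, w2] α Y, c ≠ 0 ∧
      {p : Y | c p ≠ 0}.ncard ≤ d2 * (d1 - α / w1) := by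
  classical
  subst hq
  rw [← card_powers F w1] at hd1
  rw [← card_powers F w2] at hd2
  set G1 := Finset.univ.image (fun t : Fˣ => (t : F) ^ w1) with hG1
  set G2 := Finset.univ.image (fun t : Fˣ => (t : F) ^ w2) with hG2
  have hk : α / w1 ≤ d1 - 1 := Nat.div_le_of_le_mul hα
  have hpos : 0 < d1 := by
    rw [hd1]
    exact Finset.card_pos.mpr ⟨_, Finset.mem_image_of_mem _ (Finset.mem_univ 1)⟩
  obtain ⟨S, hS, hSc⟩ := Finset.exists_subset_card_eq (s := G1) (n := α / w1) (by omega)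
  have hkα : α / w1 * w1 ≤ α := Nat.div_mul_le_self α w1
  let P : MvPolynomial (Fin 3) F :=
    X 0 ^ (α - α / w1 * w1) * ∏ s ∈ S, (X 1 - C s * X 0 ^ w1)
  have hP : IsWeightedHomogeneous ![1, w1, w2] P α := by
    have h0 : IsWeightedHomogeneous ![1, w1, w2] (X 0 : MvPolynomial (Fin 3) F) 1 :=
      isWeightedHomogeneous_X F ![1, w1, w2] 0
    have h1 : IsWeightedHomogeneous ![1, w1, w2] (X 1 : MvPolynomial (Fin 3) F) w1 :=
      isWeightedHomogeneous_X F ![1, w1, w2] 1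
    have hp := IsWeightedHomogeneous.prod S
      (fun s => (X 1 - C s * X 0 ^ w1 : MvPolynomial (Fin 3) F)) (fun _ => w1)
      (w := ![1, w1, w2]) (by
        intro s _
        refine h1.sub ?_
        have := (isWeightedHomogeneous_C ![1, w1, w2] s).mul (h0.pow w1)
        simpa using this)
    have := (h0.pow (α - α / w1 * w1)).mul hp
    convert this using 1
    simp [hSc]
    omega
  have hev : ∀ y ∈ Y, eval y P = ∏ s ∈ S, (y 1 - s) := by
    intro y hy
    rw [hY] at hy
    obtain ⟨t1, t2, rfl⟩ := hy
    simp [P, eval_prod]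
  refine ⟨evalOn F Y P, Submodule.mem_map_of_mem hP, ?_, ?_⟩
  · obtain ⟨g, hg, hgS⟩ := Finset.exists_mem_notMem_of_card_lt_card
      (s := S) (t := G1) (by omega)
    rw [hG1, Finset.mem_image] at hg
    obtain ⟨t, -, rfl⟩ := hg
    intro h0
    have hy : ![1, (t : F) ^ w1, ((1 : Fˣ) : F) ^ w2] ∈ Y := by
      rw [hY]; exact ⟨t, 1, rfl⟩
    have h1 : eval ![1, (t : F) ^ w1, ((1 : Fˣ) : F) ^ w2] P = 0 := congrFun h0 ⟨_, hy⟩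
    rw [hev _ hy, Finset.prod_eq_zero_iff] at h1
    obtain ⟨s, hs, hs0⟩ := h1
    have : (t : F) ^ w1 = s := sub_eq_zero.mp hs0
    exact hgS (this ▸ hs)
  · have hcard : (G2 ×ˢ (G1 \ S)).card = d2 * (d1 - α / w1) := by
      rw [Finset.card_product, Finset.card_sdiff_of_subset hS, hSc, hd1, hd2]
    rw [← hcard, ← Set.ncard_coe_finset]
    refine Set.ncard_le_ncard_of_injOn (fun p : Y => (p.val 2, p.val 1)) ?_ ?_
      (Finset.finite_toSet _)
    · rintro ⟨y, hy⟩ hne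
      have hne' : eval y P ≠ 0 := hne
      rw [hev y hy, Finset.prod_ne_zero_iff] at hne'
      rw [hY] at hy
      obtain ⟨t1, t2, rfl⟩ := hy
      rw [Finset.mem_coe, Finset.mem_product, Finset.mem_sdiff]
      refine ⟨Finset.mem_image_of_mem _ (Finset.mem_univ t2),
        Finset.mem_image_of_mem _ (Finset.mem_univ t1), fun hs => hne' _ hs (sub_self _)⟩
    · rintro ⟨y, hy⟩ - ⟨z, hz⟩ - h
      have h' := Prod.mk.inj h
      apply Subtype.ext
      rw [hY] at hy hz
      obtain ⟨t1, t2, rfl⟩ := hy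
      obtain ⟨u1, u2, rfl⟩ := hz
      simp at h'
      simp [h'.1, h'.2]
end

section
/- Let q be a prime power and let w_1, w_2 be positive integers; use weights (1, w_1, w_2) on 𝔽_q[x_0, x_1, x_2]. Set d_1 = (q−1)/gcd(q−1, w_1), d_2 = (q−1)/gcd(q−1, w_2), and Y = {(1, t_1^{w_1}, t_2^{w_2}) : t_1, t_2 ∈ 𝔽_q^×} ⊆ 𝔽_q^3. If α ≥ w_1(d_1 − 1) + w_2(d_2 − 1), then the minimum distance of the code C_{α,Y} equals 1; that is, there is a codeword c ∈ C_{α,Y} that is nonzero at exactly one point of Y. -/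
open MvPolynomial

theorem aux_set (F : Type) [Field F] [Fintype F] (w : ℕ) :
    ∃ S : Finset F, S.card = (Fintype.card F - 1) / Nat.gcd (Fintype.card F - 1) w - 1 ∧
      (1 : F) ∉ S ∧ ∀ t : Fˣ, (t : F) ^ w = 1 ∨ (t : F) ^ w ∈ S := by
  classical
  let T : Finset F := (Finset.univ.image (fun t : Fˣ => t ^ w)).map ⟨Units.val, Units.val_injective⟩
  have hT : T.card = (Fintype.card F - 1) / Nat.gcd (Fintype.card F - 1) w := by
    have h := IsCyclic.card_powMonoidHom_range (G := Fˣ) w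
    rw [Nat.card_eq_fintype_card (α := Fˣ), Fintype.card_units] at h
    rw [← h, Finset.card_map, ← SetLike.coe_sort_coe, Nat.card_coe_set_eq,
      ← Set.ncard_coe_finset]
    congr 1
    ext x
    simp
  refine ⟨T.erase 1, ?_, by simp, ?_⟩
  · rw [Finset.card_erase_of_mem, hT]
    simp only [T, Finset.mem_map, Finset.mem_image]
    exact ⟨1, ⟨1, by simp⟩, by simp⟩
  · intro t
    by_cases h : (t : F) ^ w = 1
    · exact Or.inl h
    · refine Or.inr (Finset.mem_erase.2 ⟨h, ?_⟩)
      simp only [T, Finset.mem_map, Finset.mem_image]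
      exact ⟨t ^ w, ⟨t, by simp⟩, by simp⟩

theorem aux_hom (F : Type) [Field F] (w : Fin 3 → ℕ) (h0 : w 0 = 1) (i : Fin 3) (S : Finset F) :
    IsWeightedHomogeneous w (∏ a ∈ S, (X i - C a * X 0 ^ w i) : MvPolynomial (Fin 3) F)
      (w i * S.card) := by
  have := IsWeightedHomogeneous.prod (w := w) S
    (fun a => (X i - C a * X 0 ^ w i : MvPolynomial (Fin 3) F)) (fun _ => w i) (by
      intro a _
      apply IsWeightedHomogeneous.sub (isWeightedHomogeneous_X _ _ _)
      apply IsWeightedHomogeneous.C_mul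
      have := (isWeightedHomogeneous_X F w 0).pow (w i)
      simpa [h0] using this)
  simpa [mul_comm] using this

/-- With `q` the cardinality of a finite field `𝔽`, positive
integers `w₁, w₂`, weights `(1, w₁, w₂)` on `𝔽[x₀, x₁, x₂]`,
`dᵢ = (q-1)/gcd(q-1, wᵢ)` and `Y = {(1, t₁^{w₁}, t₂^{w₂}) : t₁, t₂ ∈ 𝔽ˣ}`:
if `α ≥ w₁(d₁-1) + w₂(d₂-1)` then the minimum distance of `C_{α,Y}` equals `1`,
i.e. some codeword is nonzero at exactly one point of `Y`. -/
theorem stmt17 (F : Type) [Field F] [Fintype F] (q : ℕ) (hq : Fintype.card F = q)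
    (w1 w2 : ℕ) (hw1 : 0 < w1) (hw2 : 0 < w2)
    (d1 d2 : ℕ) (hd1 : d1 = (q - 1) / Nat.gcd (q - 1) w1)
    (hd2 : d2 = (q - 1) / Nat.gcd (q - 1) w2)
    (Y : Set (Fin 3 → F))
    (hY : Y = {y | ∃ t1 t2 : Fˣ, y = ![1, (t1 : F) ^ w1, (t2 : F) ^ w2]})
    (α : ℕ) (hα : w1 * (d1 - 1) + w2 * (d2 - 1) ≤ α) :
    ∃ c ∈ code F ![1, w1, w2] α Y, {p : Y | c p ≠ 0}.ncard = 1 := by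
  subst hq hd1 hd2
  obtain ⟨S1, hc1, hn1, hs1⟩ := aux_set F w1
  obtain ⟨S2, hc2, hn2, hs2⟩ := aux_set F w2
  rw [← hc1, ← hc2] at hα
  obtain ⟨k, rfl⟩ := Nat.exists_eq_add_of_le hα
  have H1 := aux_hom F ![1, w1, w2] rfl 1 S1
  have H2 := aux_hom F ![1, w1, w2] rfl 2 S2
  have H0 := (isWeightedHomogeneous_X F ![1, w1, w2] 0).pow k
  have H := (H1.mul H2).mul H0
  have hmem : (![1, 1, 1] : Fin 3 → F) ∈ Y := by
    rw [hY]; exact ⟨1, 1, by simp⟩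
  refine ⟨_, Submodule.mem_map_of_mem (f := evalOn F Y)
    ((mem_weightedHomogeneousSubmodule F _ _ _).2 (by simpa using H)), ?_⟩
  rw [Set.ncard_eq_one]
  refine ⟨⟨_, hmem⟩, ?_⟩
  ext ⟨y, hy⟩
  have hy' := hy
  rw [hY] at hy'
  obtain ⟨t1, t2, rfl⟩ := hy'
  simp only [evalOn, LinearMap.coe_mk, AddHom.coe_mk, Set.mem_setOf_eq, Set.mem_singleton_iff,
    Subtype.mk.injEq]
  simp only [map_mul, map_prod, map_sub, map_pow, eval_X, eval_C, Matrix.cons_val_zero,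
    Matrix.cons_val_one, Matrix.cons_val, one_pow, mul_one]
  constructor
  · intro h
    have h1 := (Finset.prod_ne_zero_iff.1 (left_ne_zero_of_mul h))
    have h2 := (Finset.prod_ne_zero_iff.1 (right_ne_zero_of_mul h))
    have e1 := (hs1 t1).resolve_right (fun hm => h1 _ hm (sub_self _))
    have e2 := (hs2 t2).resolve_right (fun hm => h2 _ hm (sub_self _))
    rw [e1, e2]
  · intro h
    have e1 : (t1 : F) ^ w1 = 1 := by simpa using congrFun h 1
    have e2 : (t2 : F) ^ w2 = 1 := by simpa using congrFun h 2
    rw [e1, e2]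
    refine mul_ne_zero (Finset.prod_ne_zero_iff.2 ?_) (Finset.prod_ne_zero_iff.2 ?_)
    · intro a ha h
      exact hn1 (sub_eq_zero.1 h ▸ ha)
    · intro a ha h
      exact hn2 (sub_eq_zero.1 h ▸ ha)
end
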